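/- arXiv:1207.0730 — 10 statements merged into one kernel-verified Lean document; each statement's English description precedes it below -/
import Mathlib

section
/- Let λ > 0 and let X and Y be independent random variables, each with distribution function F(x) = x^λ for x ∈ (0,1) (the power function distribution). Then the random variable min(X/Y, Y/X) also has distribution function F(x) = x^λ on (0,1); in particular, for X, Y independent uniform on (0,1), P{min(X/Y, Y/X) < s} = s for all s ∈ [0,1]. -/
open MeasureTheory ProbabilityTheory Set

lemma aux_meas {Ω : Type*} [MeasureSpace Ω] [IsProbabilityMeasure (ℙ : Measure Ω)]
    (X Y : Ω → ℝ) (hXm : Measurable X) (hYm : Measurable Y)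
    (hIndep : IndepFun X Y ℙ) (s : ℝ) :
    ℙ {ω | X ω < s * Y ω} = ∫⁻ ω, ℙ {ω' | X ω' < s * Y ω} := by
  have h1 := (indepFun_iff_map_prod_eq_prod_map_map hYm.aemeasurable hXm.aemeasurable).1
    hIndep.symm
  have hS : MeasurableSet {p : ℝ × ℝ | p.2 < s * p.1} :=
    measurableSet_lt measurable_snd (measurable_fst.const_mul s)
  have h2 : ℙ {ω | X ω < s * Y ω}
      = (Measure.map (fun ω => (Y ω, X ω)) ℙ) {p : ℝ × ℝ | p.2 < s * p.1} := by
    rw [Measure.map_apply (hYm.prodMk hXm) hS]; rfl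
  have := Measure.isProbabilityMeasure_map (μ := (ℙ : Measure Ω)) hXm.aemeasurable
  rw [h2, h1, Measure.prod_apply hS, lintegral_map (measurable_measure_prodMk_left hS) hYm]
  refine lintegral_congr fun ω => ?_
  rw [Measure.map_apply hXm (measurable_prodMk_left hS)]
  rfl

lemma aux_le {Ω : Type*} [MeasureSpace Ω] [IsProbabilityMeasure (ℙ : Measure Ω)]
    (lam : ℝ) (hlam : 0 < lam) (X Y : Ω → ℝ)
    (hXm : Measurable X) (hYm : Measurable Y) (hIndep : IndepFun X Y ℙ)
    (hYsupp : ∀ᵐ ω ∂ℙ, Y ω ∈ Ioo (0 : ℝ) 1)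
    (hXcdf : ∀ s ∈ Ioo (0 : ℝ) 1, ℙ {ω | X ω < s} = ENNReal.ofReal (s ^ lam))
    (s : ℝ) (hs : 0 < s) :
    ℙ {ω | X ω < s * Y ω} ≤ ENNReal.ofReal (s ^ lam) * ∫⁻ ω, ENNReal.ofReal (Y ω ^ lam) := by
  rw [aux_meas X Y hXm hYm hIndep, ← lintegral_const_mul _ (by fun_prop)]
  refine lintegral_mono_ae ?_
  filter_upwards [hYsupp] with ω hω
  have h0 : 0 < s * Y ω := mul_pos hs hω.1
  rw [← ENNReal.ofReal_mul (by positivity), ← Real.mul_rpow hs.le hω.1.le]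
  by_cases h : s * Y ω < 1
  · exact (hXcdf _ ⟨h0, h⟩).le
  · refine prob_le_one.trans ?_
    rw [ENNReal.one_le_ofReal]
    exact Real.one_le_rpow (not_lt.1 h) hlam.le

lemma aux_eq {Ω : Type*} [MeasureSpace Ω] [IsProbabilityMeasure (ℙ : Measure Ω)]
    (lam : ℝ) (X Y : Ω → ℝ)
    (hXm : Measurable X) (hYm : Measurable Y) (hIndep : IndepFun X Y ℙ)
    (hYsupp : ∀ᵐ ω ∂ℙ, Y ω ∈ Ioo (0 : ℝ) 1)
    (hXcdf : ∀ s ∈ Ioo (0 : ℝ) 1, ℙ {ω | X ω < s} = ENNReal.ofReal (s ^ lam))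
    (s : ℝ) (hs : 0 < s) (hs1 : s ≤ 1) :
    ℙ {ω | X ω < s * Y ω} = ENNReal.ofReal (s ^ lam) * ∫⁻ ω, ENNReal.ofReal (Y ω ^ lam) := by
  rw [aux_meas X Y hXm hYm hIndep, ← lintegral_const_mul _ (by fun_prop)]
  refine lintegral_congr_ae ?_
  filter_upwards [hYsupp] with ω hω
  have h0 : 0 < s * Y ω := mul_pos hs hω.1
  rw [← ENNReal.ofReal_mul (by positivity), ← Real.mul_rpow hs.le hω.1.le]
  exact hXcdf _ ⟨h0, by nlinarith [hω.1, hω.2]⟩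

/-- **Puri–Rubin characterization (direct part).**
If `X` and `Y` are independent random variables, each with the power function
distribution function `F(x) = x ^ lam` on `(0,1)` (for some `lam > 0`), then
`min (X/Y) (Y/X)` also has distribution function `x ^ lam` on `(0,1)`.
In particular, for `lam = 1` (the uniform case), `P(min(X/Y, Y/X) < s) = s`. -/
theorem puri_rubin_power_distribution
    {Ω : Type*} [MeasureSpace Ω] [IsProbabilityMeasure (ℙ : Measure Ω)]
    (lam : ℝ) (hlam : 0 < lam) (X Y : Ω → ℝ)
    (hXm : Measurable X) (hYm : Measurable Y)
    (hIndep : IndepFun X Y ℙ)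
    (hXsupp : ∀ᵐ ω ∂ℙ, X ω ∈ Ioo (0 : ℝ) 1)
    (hYsupp : ∀ᵐ ω ∂ℙ, Y ω ∈ Ioo (0 : ℝ) 1)
    (hXcdf : ∀ s ∈ Ioo (0 : ℝ) 1, ℙ {ω | X ω < s} = ENNReal.ofReal (s ^ lam))
    (hYcdf : ∀ s ∈ Ioo (0 : ℝ) 1, ℙ {ω | Y ω < s} = ENNReal.ofReal (s ^ lam)) :
    ∀ s ∈ Ioo (0 : ℝ) 1,
      ℙ {ω | min (X ω / Y ω) (Y ω / X ω) < s} = ENNReal.ofReal (s ^ lam) := by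
  have hA := aux_eq lam X Y hXm hYm hIndep hYsupp hXcdf
  have hB := aux_eq lam Y X hYm hXm hIndep.symm hXsupp hYcdf
  have hA' := aux_le lam hlam X Y hXm hYm hIndep hYsupp hXcdf
  have hB' := aux_le lam hlam Y X hYm hXm hIndep.symm hXsupp hYcdf
  set a := ∫⁻ ω, ENNReal.ofReal (Y ω ^ lam)
  set b := ∫⁻ ω, ENNReal.ofReal (X ω ^ lam)
  -- the event as a union
  have hU : ∀ s : ℝ, 0 < s → s ≤ 1 →
      ℙ ({ω | X ω < s * Y ω} ∪ {ω | Y ω < s * X ω}) = ENNReal.ofReal (s ^ lam) * (a + b) := by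
    intro s hs hs1
    rw [measure_union₀, hA s hs hs1, hB s hs hs1, mul_add]
    · exact (measurableSet_lt hYm (hXm.const_mul s)).nullMeasurableSet
    · rw [AEDisjoint, ← nonpos_iff_eq_zero, nonpos_iff_eq_zero, measure_eq_zero_iff_ae_notMem]
      filter_upwards [hXsupp, hYsupp] with ω hx hy h
      have h1 : X ω < s * Y ω := h.1
      have h2 : Y ω < s * X ω := h.2
      nlinarith [hx.1, hy.1]
  have hle : a + b ≤ 1 := by
    have := hU 1 one_pos le_rfl
    rw [Real.one_rpow, ENNReal.ofReal_one, one_mul] at this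
    rw [← this]
    exact prob_le_one
  have hge : 1 ≤ a + b := by
    have h1 : ∀ s : ℝ, 1 < s → 1 ≤ ENNReal.ofReal (s ^ lam) * (a + b) := by
      intro s hs
      have hs0 : 0 < s := by linarith
      have hone : ℙ ({ω | X ω < s * Y ω} ∪ {ω | Y ω < s * X ω}) = 1 := by
        rw [prob_compl_eq_zero_iff₀ (((measurableSet_lt hXm (hYm.const_mul s)).union
          (measurableSet_lt hYm (hXm.const_mul s))).nullMeasurableSet) |>.symm,
          measure_eq_zero_iff_ae_notMem]
        filter_upwards [hXsupp, hYsupp] with ω hx hy h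
        apply h
        rcases le_total (X ω) (Y ω) with h' | h'
        · left
          show X ω < s * Y ω
          nlinarith [hx.1, hy.1]
        · right
          show Y ω < s * X ω
          nlinarith [hx.1, hy.1]
      rw [← hone, mul_add]
      exact (measure_union_le _ _).trans (add_le_add (hA' s hs0) (hB' s hs0))
    have hc : Filter.Tendsto (fun s : ℝ => ENNReal.ofReal (s ^ lam) * (a + b))
        (nhdsWithin 1 (Ioi 1)) (nhds (ENNReal.ofReal ((1 : ℝ) ^ lam) * (a + b))) := by
      refine ENNReal.Tendsto.mul_const ?_ (Or.inr (ne_top_of_le_ne_top ENNReal.one_ne_top hle))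
      refine ENNReal.tendsto_ofReal ?_
      exact ((Real.continuousAt_rpow_const 1 lam (Or.inl one_ne_zero)).tendsto).mono_left
        nhdsWithin_le_nhds
    rw [Real.one_rpow, ENNReal.ofReal_one, one_mul] at hc
    exact ge_of_tendsto hc (by filter_upwards [self_mem_nhdsWithin] with s hs using h1 s hs)
  have hab : a + b = 1 := le_antisymm hle hge
  intro s hs
  rw [← mul_one (ENNReal.ofReal (s ^ lam)), ← hab, ← hU s hs.1 hs.2.le]
  refine measure_congr ?_
  filter_upwards [hXsupp, hYsupp] with ω hx hy
  apply propext
  show min (X ω / Y ω) (Y ω / X ω) < s ↔ (X ω < s * Y ω ∨ Y ω < s * X ω)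
  rw [min_lt_iff, div_lt_iff₀ hy.1, div_lt_iff₀ hx.1]
end

section
/- Let Y and Z be independent random variables, each uniformly distributed on (0,1). Then for every s ∈ (0,1), P{min(s/Y, Y/s) < Z} = 1 + s·ln(s) − s/2. -/
open MeasureTheory ProbabilityTheory Set

/-- If `Y` and `Z` are independent random variables, each uniformly distributed on `(0,1)`,
then for every `s ∈ (0,1)`, `P(min(s/Y, Y/s) < Z) = 1 + s·ln s − s/2`. -/
theorem prob_min_ratio_lt_uniform
    {Ω : Type*} [MeasureSpace Ω] [IsProbabilityMeasure (ℙ : Measure Ω)]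
    (Y Z : Ω → ℝ) (hYm : Measurable Y) (hZm : Measurable Z)
    (hIndep : IndepFun Y Z ℙ)
    (hY : Measure.map Y ℙ = volume.restrict (Ioo (0 : ℝ) 1))
    (hZ : Measure.map Z ℙ = volume.restrict (Ioo (0 : ℝ) 1))
    (s : ℝ) (hs : s ∈ Ioo (0 : ℝ) 1) :
    ℙ {ω | min (s / Y ω) (Y ω / s) < Z ω}
      = ENNReal.ofReal (1 + s * Real.log s - s / 2) := by
  obtain ⟨hs0, hs1⟩ := hs
  have hpair : Measure.map (fun ω => (Y ω, Z ω)) ℙ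
      = (volume.restrict (Ioo (0 : ℝ) 1)).prod (volume.restrict (Ioo (0 : ℝ) 1)) := by
    rw [(indepFun_iff_map_prod_eq_prod_map_map hYm.aemeasurable hZm.aemeasurable).1 hIndep, hY, hZ]
  have hmeas : MeasurableSet {p : ℝ × ℝ | min (s / p.1) (p.1 / s) < p.2} :=
    measurableSet_lt (by fun_prop) (by fun_prop)
  have h1 : ℙ {ω | min (s / Y ω) (Y ω / s) < Z ω}
      = Measure.map (fun ω => (Y ω, Z ω)) ℙ {p : ℝ × ℝ | min (s / p.1) (p.1 / s) < p.2} := by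
    rw [Measure.map_apply (hYm.prodMk hZm) hmeas]
    rfl
  rw [h1, hpair, Measure.prod_apply hmeas]
  have hslice : ∀ y ∈ Ioo (0 : ℝ) 1,
      (volume.restrict (Ioo (0 : ℝ) 1))
        (Prod.mk y ⁻¹' {p : ℝ × ℝ | min (s / p.1) (p.1 / s) < p.2})
      = ENNReal.ofReal (1 - min (s / y) (y / s)) := by
    intro y hy
    have hm : 0 < min (s / y) (y / s) := lt_min (div_pos hs0 hy.1) (div_pos hy.1 hs0)
    rw [Measure.restrict_apply (measurable_prodMk_left hmeas)]
    have : Prod.mk y ⁻¹' {p : ℝ × ℝ | min (s / p.1) (p.1 / s) < p.2} ∩ Ioo 0 1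
        = Ioo (min (s / y) (y / s)) 1 := by
      ext z
      simp only [mem_inter_iff, mem_preimage, mem_ofPred_eq, mem_Ioo]
      exact ⟨fun h => ⟨h.1, h.2.2⟩, fun h => ⟨h.1, hm.trans h.1, h.2⟩⟩
    rw [this, Real.volume_Ioo]
  rw [setLIntegral_congr_fun measurableSet_Ioo hslice]
  have e1 : EqOn (fun y : ℝ => 1 - y / s) (fun y => 1 - min (s / y) (y / s)) (Ioc 0 s) := by
    intro y hy
    have : y / s ≤ s / y := by
      rw [div_le_div_iff₀ hs0 hy.1]
      nlinarith [hy.1, hy.2]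
    simp only [min_eq_right this]
  have e2 : EqOn (fun y : ℝ => 1 - s * y⁻¹) (fun y => 1 - min (s / y) (y / s)) (Ioc s 1) := by
    intro y hy
    have hy0 : 0 < y := hs0.trans hy.1
    have : s / y ≤ y / s := by
      rw [div_le_div_iff₀ hy0 hs0]
      nlinarith [hy.1, hy.2]
    simp only [min_eq_left this]
    rw [div_eq_mul_inv]
  have h0 : (0 : ℝ) ∉ uIcc s 1 := by
    rw [uIcc_of_le hs1.le]
    exact fun h => absurd h.1 (not_le.2 hs0)
  have hinv : IntervalIntegrable (fun y : ℝ => s * y⁻¹) volume s 1 :=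
    (intervalIntegral.intervalIntegrable_inv (fun x hx hx0 => h0 (hx0 ▸ hx))
      continuousOn_id).const_mul s
  have j1 : IntervalIntegrable (fun y : ℝ => 1 - y / s) volume 0 s :=
    Continuous.intervalIntegrable (by fun_prop) _ _
  have j2 : IntervalIntegrable (fun y : ℝ => 1 - s * y⁻¹) volume s 1 :=
    intervalIntegrable_const.sub hinv
  have i1 : IntervalIntegrable (fun y : ℝ => 1 - min (s / y) (y / s)) volume 0 s :=
    j1.congr (by rw [uIoc_of_le hs0.le]; exact e1)
  have i2 : IntervalIntegrable (fun y : ℝ => 1 - min (s / y) (y / s)) volume s 1 :=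
    j2.congr (by rw [uIoc_of_le hs1.le]; exact e2)
  have hint : IntegrableOn (fun y : ℝ => 1 - min (s / y) (y / s)) (Ioo 0 1) volume :=
    ((intervalIntegrable_iff_integrableOn_Ioc_of_le zero_le_one).1 (i1.trans i2)).mono_set
      Ioo_subset_Ioc_self
  rw [← ofReal_integral_eq_lintegral_ofReal hint]
  · congr 1
    rw [← integral_Ioc_eq_integral_Ioo, ← intervalIntegral.integral_of_le zero_le_one,
      ← intervalIntegral.integral_add_adjacent_intervals i1 i2]
    have v1 : ∫ y in (0:ℝ)..s, (1 - min (s / y) (y / s)) = s - s / 2 := by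
      rw [← intervalIntegral.integral_congr_Ioo_of_le hs0.le (f := fun y : ℝ => 1 - y / s)
        (e1.mono Ioo_subset_Ioc_self)]
      rw [intervalIntegral.integral_sub intervalIntegrable_const
        (Continuous.intervalIntegrable (by fun_prop) _ _), intervalIntegral.integral_div]
      simp only [intervalIntegral.integral_const, integral_id, smul_eq_mul]
      field_simp
      ring
    have v2 : ∫ y in s..(1:ℝ), (1 - min (s / y) (y / s)) = 1 - s + s * Real.log s := by
      rw [← intervalIntegral.integral_congr_Ioo_of_le hs1.le (f := fun y : ℝ => 1 - s * y⁻¹)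
        (e2.mono Ioo_subset_Ioc_self)]
      rw [intervalIntegral.integral_sub intervalIntegrable_const hinv,
        intervalIntegral.integral_const_mul, integral_inv h0]
      simp only [intervalIntegral.integral_const, smul_eq_mul, one_div, Real.log_inv]
      ring
    rw [v1, v2]
    ring
  · refine (ae_restrict_iff' measurableSet_Ioo).2 (Filter.Eventually.of_forall fun y hy => ?_)
    simp only [Pi.zero_apply, sub_nonneg]
    rcases le_total y s with h | h
    · exact (min_le_right _ _).trans ((div_le_one hs0).2 h)
    · exact (min_le_left _ _).trans ((div_le_one hy.1).2 h)
end

section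
/- Let X, Y, Z be i.i.d. uniform random variables on (0,1) and define the symmetrized centered kernel Ψ_PR(X,Y,Z) = (1/3)(1{min(X/Y, Y/X) < Z} + 1{min(X/Z, Z/X) < Y} + 1{min(Y/Z, Z/Y) < X}) − 1/2. Then the projection of the kernel satisfies E[Ψ_PR(X,Y,Z) | X = s] = 1/6 + (2/3)·s·ln(s) for every s ∈ (0,1). -/
open MeasureTheory Set

/-- The symmetrized centered Puri–Rubin kernel
`Ψ(x,y,z) = (1/3)(1{min(x/y,y/x)<z} + 1{min(x/z,z/x)<y} + 1{min(y/z,z/y)<x}) − 1/2`. -/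
noncomputable def PsiPR (x y z : ℝ) : ℝ :=
  (1 / 3) * ((if min (x / y) (y / x) < z then (1 : ℝ) else 0)
    + (if min (x / z) (z / x) < y then (1 : ℝ) else 0)
    + (if min (y / z) (z / y) < x then (1 : ℝ) else 0)) - 1 / 2

theorem inner_gt (c : ℝ) (hc : 0 ≤ c) :
    (∫ z in Ioo (0 : ℝ) 1, (if c < z then (1 : ℝ) else 0)) = 1 - min c 1 := by
  have h : (fun z : ℝ => if c < z then (1 : ℝ) else 0) = (Ioi c).indicator (fun _ => 1) := by
    ext z; simp [indicator]
  have h2 : Ioo (0 : ℝ) 1 ∩ Ioi c = Ioo c 1 := by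
    ext z; simp only [mem_inter_iff, mem_Ioo, mem_Ioi]
    constructor
    · rintro ⟨⟨_, _⟩, _⟩; constructor <;> assumption
    · rintro ⟨_, _⟩; refine ⟨⟨?_, ?_⟩, ?_⟩ <;> linarith
  rw [h, setIntegral_indicator measurableSet_Ioi, h2]
  simp only [integral_const, smul_eq_mul, mul_one, measureReal_restrict_apply_univ,
    Real.volume_real_Ioo]
  rcases le_total c 1 with h | h
  · rw [min_eq_left h, max_eq_left (by linarith)]
  · rw [min_eq_right h, max_eq_right (by linarith)]; ring

theorem inner_lt (c : ℝ) (hc : 0 ≤ c) (hc1 : c ≤ 1) :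
    (∫ z in Ioo (0 : ℝ) 1, (if z < c then (1 : ℝ) else 0)) = c := by
  have h : (fun z : ℝ => if z < c then (1 : ℝ) else 0) = (Iio c).indicator (fun _ => 1) := by
    ext z; simp [indicator]
  have h2 : Ioo (0 : ℝ) 1 ∩ Iio c = Ioo 0 c := by
    ext z; simp only [mem_inter_iff, mem_Ioo, mem_Iio]
    constructor
    · rintro ⟨⟨_, _⟩, _⟩; constructor <;> assumption
    · rintro ⟨_, _⟩; refine ⟨⟨?_, ?_⟩, ?_⟩ <;> linarith
  rw [h, setIntegral_indicator measurableSet_Iio, h2]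
  simp only [integral_const, smul_eq_mul, mul_one, measureReal_restrict_apply_univ,
    Real.volume_real_Ioo]
  rw [max_eq_left (by linarith)]; ring

theorem ind_integrable {α : Type*} [MeasurableSpace α] (μ : Measure α) [IsFiniteMeasure μ]
    (f g : α → ℝ) (hf : Measurable f) (hg : Measurable g) :
    Integrable (fun p => if f p < g p then (1 : ℝ) else 0) μ := by
  refine Integrable.of_bound (C := 1) ?_ ?_
  · exact (Measurable.ite (measurableSet_lt hf hg) measurable_const
      measurable_const).aestronglyMeasurable
  · filter_upwards with p
    split_ifs <;> simp

theorem outer_split (s : ℝ) (hs : s ∈ Ioo (0 : ℝ) 1) (F f g : ℝ → ℝ)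
    (h1 : ∀ y ∈ Icc 0 s, F y = f y) (h2 : ∀ y ∈ Icc s 1, F y = g y)
    (hf : ContinuousOn f (Icc 0 s)) (hg : ContinuousOn g (Icc s 1)) :
    (∫ y in Ioo (0 : ℝ) 1, F y) = (∫ y in (0 : ℝ)..s, f y) + ∫ y in s..1, g y := by
  obtain ⟨a, b⟩ := hs
  rw [← integral_Ioc_eq_integral_Ioo, ← intervalIntegral.integral_of_le zero_le_one]
  have i1 : IntervalIntegrable F volume 0 s := by
    apply ContinuousOn.intervalIntegrable
    rw [uIcc_of_le a.le]
    exact hf.congr h1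
  have i2 : IntervalIntegrable F volume s 1 := by
    apply ContinuousOn.intervalIntegrable
    rw [uIcc_of_le b.le]
    exact hg.congr h2
  rw [← intervalIntegral.integral_add_adjacent_intervals i1 i2]
  congr 1
  · apply intervalIntegral.integral_congr
    rw [uIcc_of_le a.le]; exact h1
  · apply intervalIntegral.integral_congr
    rw [uIcc_of_le b.le]; exact h2

theorem term1 (s : ℝ) (hs : s ∈ Ioo (0 : ℝ) 1) :
    (∫ y in Ioo (0 : ℝ) 1, ∫ z in Ioo (0 : ℝ) 1,
      (if min (s / y) (y / s) < z then (1 : ℝ) else 0)) = 1 - s / 2 + s * Real.log s := by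
  have a := hs.1
  have b := hs.2
  rw [outer_split s hs _ (fun y => 1 - y / s) (fun y => 1 - s * y⁻¹)]
  · rw [intervalIntegral.integral_sub (by simp) (by
      apply Continuous.intervalIntegrable; fun_prop), intervalIntegral.integral_sub (by simp) (by
      apply ContinuousOn.intervalIntegrable
      rw [uIcc_of_le b.le]
      exact continuousOn_const.mul (continuousOn_id.inv₀ (fun x hx => by
        have := hx.1
        simp only [id]; linarith))),
      intervalIntegral.integral_const_mul, integral_inv_of_pos a one_pos,
      intervalIntegral.integral_div, integral_id]
    simp
    field_simp
    ring
  · intro y hy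
    rcases hy.1.eq_or_lt with h | h
    · subst h
      rw [inner_gt _ (by simp)]
      simp
    · have e1 : y / s ≤ 1 := (div_le_one a).2 hy.2
      have e2 : 1 ≤ s / y := (one_le_div h).2 hy.2
      have e3 : 0 ≤ y / s := by positivity
      rw [min_eq_right (by linarith), inner_gt _ e3, min_eq_left e1]
  · intro y hy
    have h : 0 < y := lt_of_lt_of_le a hy.1
    have e1 : s / y ≤ 1 := (div_le_one h).2 hy.1
    have e2 : 1 ≤ y / s := (one_le_div a).2 hy.1
    have e3 : 0 ≤ s / y := by positivity
    rw [min_eq_left (by linarith), inner_gt _ e3, min_eq_left e1, div_eq_mul_inv]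
  · fun_prop
  · exact continuousOn_const.sub (continuousOn_const.mul (continuousOn_id.inv₀ (fun x hx => by
        have := hx.1
        simp only [id]; linarith)))

theorem term3 (s : ℝ) (hs : s ∈ Ioo (0 : ℝ) 1) :
    (∫ y in Ioo (0 : ℝ) 1, ∫ z in Ioo (0 : ℝ) 1,
      (if min (y / z) (z / y) < s then (1 : ℝ) else 0)) = s := by
  have a := hs.1
  have b := hs.2
  have key : ∀ y ∈ Ioo (0 : ℝ) 1, (∫ z in Ioo (0 : ℝ) 1,
      (if min (y / z) (z / y) < s then (1 : ℝ) else 0)) = s * y + (1 - min (y / s) 1) := by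
    rintro y ⟨hy, hy1⟩
    rw [← inner_gt (y / s) (by positivity)]
    rw [← inner_lt (s * y) (by positivity) (by nlinarith)]
    rw [← integral_add (ind_integrable _ (fun z => z) (fun _ => s * y) measurable_id measurable_const)
      (ind_integrable _ (fun _ => y / s) (fun z => z) measurable_const measurable_id)]
    apply setIntegral_congr_fun measurableSet_Ioo
    rintro z ⟨hz, hz1⟩
    have e1 : y / z < s ↔ y / s < z := by
      rw [div_lt_iff₀ hz, div_lt_iff₀ a, mul_comm]
    have e2 : z / y < s ↔ z < s * y := div_lt_iff₀ hy
    have e3 : z < s * y → ¬ y / s < z := by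
      intro h
      rw [div_lt_iff₀ a]
      nlinarith
    simp only [min_lt_iff, e1, e2]
    by_cases h : z < s * y
    · simp [h, e3 h]
    · simp [h]
  rw [setIntegral_congr_fun measurableSet_Ioo key]
  rw [outer_split s hs _ (fun y => s * y + (1 - y / s)) (fun y => s * y)]
  · rw [intervalIntegral.integral_add (by
      apply Continuous.intervalIntegrable; fun_prop) (by
      apply Continuous.intervalIntegrable; fun_prop),
      intervalIntegral.integral_sub (by simp) (by
      apply Continuous.intervalIntegrable; fun_prop),
      intervalIntegral.integral_const_mul, intervalIntegral.integral_const_mul,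
      intervalIntegral.integral_div, integral_id, integral_id]
    simp
    field_simp
    ring
  · intro y hy
    simp only [min_eq_left ((div_le_one a).2 hy.2)]
  · intro y hy
    simp only [min_eq_right ((one_le_div a).2 hy.1)]
    ring
  · fun_prop
  · fun_prop

/-- For `X, Y, Z` i.i.d. uniform on `(0,1)`, the projection of the kernel `Ψ_PR`
satisfies `E[Ψ_PR(X,Y,Z) | X = s] = 1/6 + (2/3)·s·ln s` for every `s ∈ (0,1)`:
integrating out the two independent uniform variables `Y, Z` at `X = s` gives
`ψ_PR(s) = 1/6 + (2/3) s ln s`. -/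
theorem projection_PsiPR (s : ℝ) (hs : s ∈ Ioo (0 : ℝ) 1) :
    (∫ p : ℝ × ℝ, PsiPR s p.1 p.2
        ∂((volume.restrict (Ioo (0 : ℝ) 1)).prod (volume.restrict (Ioo (0 : ℝ) 1))))
      = 1 / 6 + (2 / 3) * s * Real.log s := by
  have : IsProbabilityMeasure (volume.restrict (Ioo (0 : ℝ) 1)) := ⟨by simp⟩
  have I1 := ind_integrable
    ((volume.restrict (Ioo (0 : ℝ) 1)).prod (volume.restrict (Ioo (0 : ℝ) 1)))
    (fun p => min (s / p.1) (p.1 / s)) (fun p => p.2) (by fun_prop) (by fun_prop)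
  have I2 := ind_integrable
    ((volume.restrict (Ioo (0 : ℝ) 1)).prod (volume.restrict (Ioo (0 : ℝ) 1)))
    (fun p => min (s / p.2) (p.2 / s)) (fun p => p.1) (by fun_prop) (by fun_prop)
  have I3 := ind_integrable
    ((volume.restrict (Ioo (0 : ℝ) 1)).prod (volume.restrict (Ioo (0 : ℝ) 1)))
    (fun p => min (p.1 / p.2) (p.2 / p.1)) (fun _ => s) (by fun_prop) (by fun_prop)
  have t1 := integral_prod _ I1
  have t2 := integral_prod_symm _ I2
  have t3 := integral_prod _ I3
  simp only [term1 s hs, term3 s hs] at t1 t2 t3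
  unfold PsiPR
  rw [integral_sub (by exact ((I1.add I2).add I3).const_mul _) (integrable_const _),
    integral_const_mul, integral_add (by exact I1.add I2) I3, integral_add I1 I2, t1, t2, t3]
  simp
  ring
end

section
/- Let ψ_PR(s) = 1/6 + (2/3)·s·ln(s) for s ∈ (0,1). Then ∫_0^1 ψ_PR(s)^2 ds = 5/972; in particular this integral is strictly positive. -/
open MeasureTheory Set

/-- The variance of the projection `ψ_PR(s) = 1/6 + (2/3)·s·ln s` of the Puri–Rubin
kernel: `∫₀¹ ψ_PR(s)² ds = 5/972`; in particular this integral is strictly positive,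
so the kernel is non-degenerate. -/
theorem integral_sq_projection_PsiPR :
    (∫ s in Ioo (0 : ℝ) 1, (1 / 6 + (2 / 3) * s * Real.log s) ^ 2) = 5 / 972 ∧
    0 < ∫ s in Ioo (0 : ℝ) 1, (1 / 6 + (2 / 3) * s * Real.log s) ^ 2 := by
  have hc : Continuous fun s : ℝ => s * Real.log s := Real.continuous_mul_log
  have key : (∫ s in Ioo (0 : ℝ) 1, (1 / 6 + (2 / 3) * s * Real.log s) ^ 2) = 5 / 972 := by
    rw [← integral_Ioc_eq_integral_Ioo, ← intervalIntegral.integral_of_le zero_le_one]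
    have hi : Continuous fun s : ℝ => (1 / 6 + (2 / 3) * s * Real.log s) ^ 2 := by
      have : Continuous fun s : ℝ => (1 / 6 + (2 / 3) * (s * Real.log s)) ^ 2 := by fun_prop
      simpa only [mul_assoc] using this
    have hF : Continuous fun s : ℝ => s / 36 + (2 / 9) * (s / 2 * (s * Real.log s) - s ^ 2 / 4)
        + (4 / 9) * (s / 3 * (s * Real.log s) ^ 2 - 2 / 9 * s ^ 2 * (s * Real.log s)
          + 2 / 27 * s ^ 3) := by fun_prop
    rw [intervalIntegral.integral_eq_sub_of_hasDerivAt_of_le zero_le_one hF.continuousOn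
      (fun x hx => ?_) (hi.intervalIntegrable 0 1)]
    · norm_num
    · have hl := Real.hasDerivAt_mul_log hx.1.ne'
      have h1 := hasDerivAt_id' x
      have h := ((h1.div_const 36).add (((((h1.div_const 2).mul hl)).sub
        ((h1.pow 2).div_const 4)).const_mul (2 / 9))).add
        (((((h1.div_const 3).mul (hl.pow 2)).sub (((h1.pow 2).const_mul (2 / 9)).mul hl)).add
          ((h1.pow 3).const_mul (2 / 27))).const_mul (4 / 9))
      refine h.congr_deriv ?_
      simp
      ring
  exact ⟨key, by rw [key]; norm_num⟩
end

section
/- Let h be a bounded measurable function on (0,1) with ∫_0^1 h(x) dx = 0, and for small θ ≥ 0 let g(x,θ) = 1 + θ·h(x) (a probability density on (0,1) for θ small enough). Let K(θ) = inf_{λ>0} ∫_0^1 ln( g(x,θ)/(λ x^{λ−1}) ) g(x,θ) dx be the Kullback–Leibler distance from g(·,θ) to the power function family. Then 2K(θ) ~ θ² [ ∫_0^1 h(x)² dx − ( ∫_0^1 h(x) ln(x) dx )² ] as θ → 0+, i.e. 2K(θ)/θ² converges to ∫_0^1 h² − (∫_0^1 h(x) ln x dx)². -/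
open MeasureTheory Set Filter Topology

lemma aux_log (u : ℝ) (hu : |u| ≤ 1/2) : |Real.log (1 + u) - u + u^2/2| ≤ 2 * |u|^3 := by
  have h1 := Real.abs_log_sub_add_sum_range_le (x := -u) (by rw [abs_neg]; linarith) 2
  simp only [Finset.sum_range_succ, Finset.sum_range_zero, abs_neg] at h1
  have e : (0 + (-u) ^ (0 + 1) / (((0:ℕ):ℝ) + 1) + (-u) ^ (1 + 1) / (((1:ℕ):ℝ) + 1) + Real.log (1 - -u))
      = Real.log (1 + u) - u + u^2/2 := by
    rw [sub_neg_eq_add]; push_cast; ring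
  rw [e] at h1
  refine h1.trans ?_
  rw [div_le_iff₀ (by linarith)]
  have : 0 ≤ |u|^3 := by positivity
  norm_num
  nlinarith

lemma aux_ent (u : ℝ) (hu : |u| ≤ 1/2) :
    |(1 + u) * Real.log (1 + u) - u - u^2/2| ≤ 4 * |u|^3 := by
  have h1 := aux_log u hu
  have e : (1 + u) * Real.log (1 + u) - u - u^2/2
      = (1 + u) * (Real.log (1 + u) - u + u^2/2) - u^3/2 := by ring
  have h2 : |1 + u| ≤ 3/2 := by
    have := abs_le.mp hu
    rw [abs_le]; constructor <;> linarith
  have h3 : |(1 + u) * (Real.log (1 + u) - u + u^2/2)| ≤ 3/2 * (2 * |u|^3) := by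
    rw [abs_mul]; gcongr
  have h4 : |u^3/2| = |u|^3/2 := by rw [abs_div, abs_pow]; norm_num
  rw [e]
  have := abs_sub ((1 + u) * (Real.log (1 + u) - u + u^2/2)) (u^3/2)
  have : 0 ≤ |u|^3 := by positivity
  linarith

lemma aux_logint : IntegrableOn Real.log (Ioo (0:ℝ) 1) ∧ ∫ x in Ioo (0:ℝ) 1, Real.log x = -1 := by
  constructor
  · have : IntervalIntegrable Real.log volume 0 1 := intervalIntegral.intervalIntegrable_log'
    rw [intervalIntegrable_iff_integrableOn_Ioo_of_le zero_le_one] at this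
    exact this
  · rw [← integral_Ioc_eq_integral_Ioo, ← intervalIntegral.integral_of_le zero_le_one, integral_log]
    simp

lemma aux_inf (E s : ℝ) (hs : 0 < s) :
    sInf ((fun l : ℝ => E - Real.log l + (l - 1) * s) '' Ioi 0) = E + Real.log s + 1 - s := by
  apply IsLeast.csInf_eq
  constructor
  · refine ⟨s⁻¹, inv_pos.mpr hs, ?_⟩
    simp only [Real.log_inv]
    field_simp
    ring
  · rintro _ ⟨l, hl, rfl⟩
    have hl : 0 < l := hl
    have := Real.log_le_sub_one_of_pos (mul_pos hl hs)
    rw [Real.log_mul hl.ne' hs.ne'] at this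
    simp only
    linarith

/-- **Local expansion of the Kullback–Leibler distance to the power function family.**
Let `h` be bounded measurable on `(0,1)` with `∫₀¹ h = 0` and, for small `θ ≥ 0`,
let `g(x,θ) = 1 + θ·h(x)` (a probability density on `(0,1)` for `θ` small).  With
`K(θ) = inf_{λ>0} ∫₀¹ ln(g(x,θ)/(λ x^{λ−1})) g(x,θ) dx` the Kullback–Leibler distance
to the power family, one has
`2K(θ)/θ² → ∫₀¹ h² − (∫₀¹ h(x) ln x dx)²` as `θ → 0+`. -/
theorem kullback_leibler_local_expansion
    (h : ℝ → ℝ) (hmeas : Measurable h)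
    (hbdd : ∃ C : ℝ, ∀ x ∈ Ioo (0 : ℝ) 1, |h x| ≤ C)
    (hzero : ∫ x in Ioo (0 : ℝ) 1, h x = 0) :
    Tendsto
      (fun θ : ℝ =>
        2 * sInf ((fun l : ℝ =>
            ∫ x in Ioo (0 : ℝ) 1,
              Real.log ((1 + θ * h x) / (l * x ^ (l - 1))) * (1 + θ * h x)) '' Ioi 0)
          / θ ^ 2)
      (𝓝[>] 0)
      (𝓝 ((∫ x in Ioo (0 : ℝ) 1, h x ^ 2)
            - (∫ x in Ioo (0 : ℝ) 1, h x * Real.log x) ^ 2)) := by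
  obtain ⟨C, hC⟩ := hbdd
  have hC0 : 0 ≤ C := (abs_nonneg _).trans (hC (1/2) (by constructor <;> norm_num))
  obtain ⟨hlogI, hlogV⟩ := aux_logint
  set a := ∫ x in Ioo (0 : ℝ) 1, h x * Real.log x with ha
  set V := ∫ x in Ioo (0 : ℝ) 1, h x ^ 2 with hV
  -- integrability of bounded functions
  have hbi : ∀ (f : ℝ → ℝ) (B : ℝ), Measurable f → (∀ x ∈ Ioo (0:ℝ) 1, |f x| ≤ B) →
      IntegrableOn f (Ioo 0 1) := by
    intro f B hf hB
    refine Measure.integrableOn_of_bounded (M := B) (by simp) hf.aestronglyMeasurable ?_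
    filter_upwards [ae_restrict_mem measurableSet_Ioo] with x hx using hB x hx
  have hhI : IntegrableOn h (Ioo 0 1) := hbi h C hmeas hC
  have hh2I : IntegrableOn (fun x => h x ^ 2) (Ioo 0 1) := by
    refine hbi _ (C^2) (hmeas.pow_const 2) ?_
    intro x hx
    rw [abs_pow]
    have := hC x hx
    gcongr
  have hhlI : IntegrableOn (fun x => h x * Real.log x) (Ioo 0 1) := by
    refine Integrable.bdd_mul (c := C) hlogI hmeas.aestronglyMeasurable ?_
    filter_upwards [ae_restrict_mem measurableSet_Ioo] with x hx using hC x hx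
  have key : ∀ θ : ℝ, 0 < θ → θ * C ≤ 1/2 → θ * |a| ≤ 1/2 →
      |2 * sInf ((fun l : ℝ =>
            ∫ x in Ioo (0 : ℝ) 1,
              Real.log ((1 + θ * h x) / (l * x ^ (l - 1))) * (1 + θ * h x)) '' Ioi 0)
          / θ ^ 2 - (V - a^2)| ≤ θ * (8 * C^3 + 4 * |a|^3) := by
    intro θ hθ h1 h2
    have hu : ∀ x ∈ Ioo (0:ℝ) 1, |θ * h x| ≤ θ * C := by
      intro x hx
      rw [abs_mul, abs_of_pos hθ]
      exact mul_le_mul_of_nonneg_left (hC x hx) hθ.le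
    set E := ∫ x in Ioo (0:ℝ) 1, (1 + θ * h x) * Real.log (1 + θ * h x) with hE
    have hrem : ∀ x ∈ Ioo (0:ℝ) 1, |(1 + θ * h x) * Real.log (1 + θ * h x) - θ * h x
        - (θ * h x)^2/2| ≤ 4 * (θ * C)^3 := by
      intro x hx
      refine (aux_ent _ ((hu x hx).trans h1)).trans ?_
      have := hu x hx
      gcongr
    have hmR : Measurable (fun x => (1 + θ * h x) * Real.log (1 + θ * h x) - θ * h x
        - (θ * h x)^2/2) := by fun_prop
    have hRI := hbi _ _ hmR hrem
    have hq : IntegrableOn (fun x => (θ * h x)^2/2) (Ioo 0 1) := by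
      have := hh2I.const_mul (θ^2/2)
      refine this.congr (ae_of_all _ fun x => ?_)
      simp only; ring
    have hθI : IntegrableOn (fun x => θ * h x) (Ioo 0 1) := hhI.const_mul θ
    have hEI : IntegrableOn (fun x => (1 + θ * h x) * Real.log (1 + θ * h x)) (Ioo 0 1) := by
      refine ((hRI.add hq).add hθI).congr (ae_of_all _ fun x => ?_)
      simp only [Pi.add_apply]; ring
    have hRV : ∫ x in Ioo (0:ℝ) 1, ((1 + θ * h x) * Real.log (1 + θ * h x) - θ * h x
        - (θ * h x)^2/2) = E - θ^2/2 * V := by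
      have i0 : IntegrableOn (fun x => (1 + θ * h x) * Real.log (1 + θ * h x) - θ * h x)
          (Ioo (0:ℝ) 1) := hEI.sub hθI
      rw [integral_sub i0 hq, integral_sub hEI hθI, integral_const_mul, hzero]
      have : ∫ x in Ioo (0:ℝ) 1, (θ * h x)^2/2 = θ^2/2 * V := by
        rw [hV, ← integral_const_mul]
        congr 1; ext x; ring
      rw [this]; ring
    have hEb : |E - θ^2/2 * V| ≤ 4 * (θ * C)^3 := by
      rw [← hRV]
      have := norm_setIntegral_le_of_norm_le_const (μ := volume) (s := Ioo (0:ℝ) 1)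
        (f := fun x => (1 + θ * h x) * Real.log (1 + θ * h x) - θ * h x - (θ * h x)^2/2)
        (C := 4 * (θ * C)^3) (by simp) hrem
      simpa using this
    have hF : ∀ l ∈ Ioi (0:ℝ), ∫ x in Ioo (0 : ℝ) 1,
              Real.log ((1 + θ * h x) / (l * x ^ (l - 1))) * (1 + θ * h x)
              = E - Real.log l + (l - 1) * (1 - θ * a) := by
      intro l hl
      have hl : 0 < l := hl
      have e : ∫ x in Ioo (0 : ℝ) 1,
              Real.log ((1 + θ * h x) / (l * x ^ (l - 1))) * (1 + θ * h x)
          = ∫ x in Ioo (0 : ℝ) 1, ((1 + θ * h x) * Real.log (1 + θ * h x)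
              - (Real.log l * (1 + θ * h x)
              + (l - 1) * (Real.log x + θ * (h x * Real.log x)))) := by
        refine setIntegral_congr_fun measurableSet_Ioo fun x hx => ?_
        have h3 := abs_le.mp ((hu x hx).trans h1)
        have h4 : 0 < x ^ (l - 1) := Real.rpow_pos_of_pos hx.1 _
        rw [Real.log_div (by linarith) (mul_pos hl h4).ne', Real.log_mul hl.ne' h4.ne',
          Real.log_rpow hx.1]
        ring
      have i1 : IntegrableOn (fun x => 1 + θ * h x) (Ioo (0:ℝ) 1) :=
        (integrableOn_const (by simp)).add hθI
      have i2 : IntegrableOn (fun x => Real.log x + θ * (h x * Real.log x)) (Ioo (0:ℝ) 1) :=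
        hlogI.add (hhlI.const_mul θ)
      have i3 : IntegrableOn (fun x => Real.log l * (1 + θ * h x)
              + (l - 1) * (Real.log x + θ * (h x * Real.log x))) (Ioo (0:ℝ) 1) :=
        (i1.const_mul _).add (i2.const_mul _)
      have i4 : IntegrableOn (fun _ : ℝ => (1:ℝ)) (Ioo (0:ℝ) 1) := integrableOn_const (by simp)
      rw [e, integral_sub hEI i3,
        integral_add (i1.const_mul _) (i2.const_mul _), integral_const_mul, integral_const_mul,
        integral_add i4 hθI, integral_add hlogI (hhlI.const_mul θ),
        integral_const_mul, integral_const_mul, hzero, hlogV, ← ha]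
      simp
      ring
    rw [image_congr hF]
    have hau : |-(θ * a)| = θ * |a| := by rw [abs_neg, abs_mul, abs_of_pos hθ]
    have h3 : θ * a ≤ 1/2 := (mul_le_mul_of_nonneg_left (le_abs_self a) hθ.le).trans h2
    rw [aux_inf E (1 - θ * a) (by linarith)]
    have hL := aux_log (-(θ * a)) (by rw [hau]; exact h2)
    rw [hau, ← sub_eq_add_neg] at hL
    have e : 2 * (E + Real.log (1 - θ * a) + 1 - (1 - θ * a)) / θ^2 - (V - a^2)
       = (2 * (E - θ^2/2 * V) + 2 * (Real.log (1 - θ * a) - -(θ * a) + (-(θ * a))^2/2)) / θ^2 := by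
      field_simp
      ring
    rw [e, abs_div, abs_of_pos (by positivity : 0 < θ^2), div_le_iff₀ (by positivity)]
    rw [abs_le] at hEb hL ⊢
    constructor <;> nlinarith
  rw [tendsto_iff_norm_sub_tendsto_zero]
  have hlim : Tendsto (fun θ : ℝ => θ * (8 * C^3 + 4 * |a|^3)) (𝓝[>] 0) (𝓝 0) := by
    have : Tendsto (fun θ : ℝ => θ * (8 * C^3 + 4 * |a|^3)) (𝓝 0) (𝓝 (0 * (8 * C^3 + 4 * |a|^3))) :=
      tendsto_id.mul_const _
    rw [zero_mul] at this
    exact this.mono_left nhdsWithin_le_nhds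
  have hsm : ∀ B : ℝ, ∀ᶠ θ : ℝ in 𝓝[>] 0, θ * B ≤ 1/2 := by
    intro B
    have : Tendsto (fun θ : ℝ => θ * B) (𝓝 0) (𝓝 (0 * B)) := tendsto_id.mul_const _
    rw [zero_mul] at this
    exact (this.mono_left nhdsWithin_le_nhds).eventually_le_const (by norm_num)
  refine squeeze_zero' (Eventually.of_forall fun _ => norm_nonneg _) ?_ hlim
  filter_upwards [self_mem_nhdsWithin, hsm C, hsm |a|] with θ t1 t2 t3
  exact key θ t1 t2 t3
end

section
/- Let r > 1 and h(x) = r x^{r−1} − 1 for x ∈ (0,1). Then ∫_0^1 h(x)² dx − ( ∫_0^1 h(x) ln(x) dx )² = (r−1)⁴ / ( r² (2r−1) ). Consequently, for the contamination alternative with distribution function G_1(x,θ) = (1−θ)x + θ x^r and density g_1(x,θ) = 1 + θ h(x), the Kullback–Leibler distance K(θ) to the power function family satisfies 2K(θ) ~ ( (r−1)⁴ / ( r² (2r−1) ) ) θ² as θ → 0+. -/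
open MeasureTheory Set Filter Topology

lemma log_bound {u : ℝ} (hu : |u| ≤ 1 / 2) :
    |Real.log (1 + u) - u + u ^ 2 / 2| ≤ 2 * |u| ^ 3 := by
  have h := Real.abs_log_sub_add_sum_range_le (x := -u) (by rw [abs_neg]; linarith) 2
  simp only [Finset.sum_range_succ, Finset.sum_range_zero, abs_neg] at h
  have h2 : |u| ^ 3 / (1 - |u|) ≤ 2 * |u| ^ 3 := by
    rw [div_le_iff₀ (by linarith)]
    have : 0 ≤ |u| ^ 3 := by positivity
    nlinarith
  refine le_trans (le_of_eq ?_) (h.trans h2)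
  congr 1
  norm_num
  ring

lemma mul_log_bound {u : ℝ} (hu : |u| ≤ 1 / 2) :
    |(1 + u) * Real.log (1 + u) - u - u ^ 2 / 2| ≤ 4 * |u| ^ 3 := by
  have h := log_bound hu
  have e : (1 + u) * Real.log (1 + u) - u - u ^ 2 / 2
      = (1 + u) * (Real.log (1 + u) - u + u ^ 2 / 2) + (-(u ^ 3 / 2)) := by ring
  rw [e]
  refine (abs_add_le _ _).trans ?_
  rw [abs_mul, abs_neg, abs_div, abs_pow]
  have h1 : |1 + u| ≤ 3 / 2 := by
    refine (abs_add_le _ _).trans ?_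
    rw [abs_one]; linarith
  have h3 : 0 ≤ |u| ^ 3 := by positivity
  have h2 : |1 + u| * |Real.log (1 + u) - u + u ^ 2 / 2| ≤ 3 / 2 * (2 * |u| ^ 3) :=
    mul_le_mul h1 h (abs_nonneg _) (by norm_num)
  have : |(2:ℝ)| = 2 := abs_two
  rw [this]
  linarith

lemma set_integral_rpow {p : ℝ} (hp : -1 < p) :
    ∫ x in Ioo (0 : ℝ) 1, x ^ p = 1 / (p + 1) := by
  rw [← integral_Ioc_eq_integral_Ioo, ← intervalIntegral.integral_of_le zero_le_one,
    integral_rpow (Or.inl hp), Real.one_rpow, Real.zero_rpow (by linarith)]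
  simp

lemma integrable_rpow' {p : ℝ} (hp : -1 < p) :
    IntegrableOn (fun x : ℝ => x ^ p) (Ioo (0 : ℝ) 1) := by
  have := intervalIntegral.intervalIntegrable_rpow' (a := 0) (b := 1) hp
  exact ((intervalIntegrable_iff_integrableOn_Ioo_of_le zero_le_one).1 this)

lemma integrable_log' : IntegrableOn Real.log (Ioo (0 : ℝ) 1) :=
  (intervalIntegrable_iff_integrableOn_Ioo_of_le zero_le_one).1
    (intervalIntegral.intervalIntegrable_log' (a := 0) (b := 1))

lemma set_integral_log : ∫ x in Ioo (0 : ℝ) 1, Real.log x = -1 := by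
  rw [← integral_Ioc_eq_integral_Ioo, ← intervalIntegral.integral_of_le zero_le_one,
    integral_log]
  simp

lemma integrable_rpow_log {r : ℝ} (hr : 1 < r) :
    IntegrableOn (fun x : ℝ => x ^ (r - 1) * Real.log x) (Ioo (0 : ℝ) 1) := by
  refine Integrable.bdd_mul (c := 1) integrable_log' ?_ ?_
  · exact (by fun_prop : Measurable (fun x : ℝ => x ^ (r - 1))).aestronglyMeasurable
  · filter_upwards [ae_restrict_mem measurableSet_Ioo] with x hx
    rw [Real.norm_of_nonneg (Real.rpow_nonneg hx.1.le _)]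
    exact Real.rpow_le_one hx.1.le hx.2.le (by linarith)

lemma set_integral_rpow_log {r : ℝ} (hr : 1 < r) :
    ∫ x in Ioo (0 : ℝ) 1, x ^ (r - 1) * Real.log x = -1 / r ^ 2 := by
  have hr0 : r ≠ 0 := by linarith
  rw [← integral_Ioc_eq_integral_Ioo, ← intervalIntegral.integral_of_le zero_le_one]
  rw [intervalIntegral.integral_eq_sub_of_hasDerivAt_of_tendsto
    (f := fun x ↦ Real.log x * x ^ r / r - x ^ r / r ^ 2)
    (fa := 0) (fb := -1 / r ^ 2) zero_lt_one]
  · simp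
  · intro x hx
    have h1 := Real.hasDerivAt_log hx.1.ne'
    have h2 := Real.hasDerivAt_rpow_const (x := x) (p := r) (Or.inl hx.1.ne')
    have h3 := ((h1.mul h2).div_const r).sub (h2.div_const (r ^ 2))
    convert! h3 using 1
    have : x ^ r = x ^ (r - 1) * x := by
      rw [← Real.rpow_add_one hx.1.ne']; congr 1; ring
    rw [this]
    have := hx.1.ne'
    field_simp
    ring
  · exact (intervalIntegrable_iff_integrableOn_Ioo_of_le zero_le_one).2 (integrable_rpow_log hr)
  · have h1 := (tendsto_log_mul_rpow_nhdsGT_zero (r := r) (by linarith)).div_const r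
    have h2 : Tendsto (fun x : ℝ => x ^ r / r ^ 2) (𝓝[>] 0) (𝓝 ((0:ℝ) ^ r / r ^ 2)) :=
      ((Real.continuousAt_rpow_const 0 r (Or.inr (by linarith))).tendsto.mono_left
        nhdsWithin_le_nhds).div_const _
    have := h1.sub h2
    rwa [Real.zero_rpow hr0, zero_div, zero_div, sub_zero] at this
  · have : ContinuousAt (fun x : ℝ ↦ Real.log x * x ^ r / r - x ^ r / r ^ 2) 1 := by
      have h1 := Real.continuousAt_log (x := 1) one_ne_zero
      have h2 := Real.continuousAt_rpow_const 1 r (Or.inl one_ne_zero)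
      exact ((h1.mul h2).div_const r).sub (h2.div_const _)
    have := this.tendsto.mono_left (nhdsWithin_le_nhds (s := Iio 1))
    convert this using 2
    simp
    ring

lemma generic_limit (h : ℝ → ℝ) (M s c : ℝ) (hm : Measurable h) (hM1 : 1 ≤ M)
    (hM : ∀ x ∈ Ioo (0 : ℝ) 1, |h x| ≤ M)
    (h0 : ∫ x in Ioo (0 : ℝ) 1, h x = 0)
    (h2 : ∫ x in Ioo (0 : ℝ) 1, (h x) ^ 2 = s)
    (hl : ∫ x in Ioo (0 : ℝ) 1, h x * Real.log x = c) (hc : |c| ≤ 1) :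
    Tendsto
      (fun θ : ℝ =>
        2 * sInf ((fun l : ℝ =>
            ∫ x in Ioo (0 : ℝ) 1,
              Real.log ((1 + θ * h x) / (l * x ^ (l - 1))) * (1 + θ * h x)) '' Ioi 0)
          / θ ^ 2) (𝓝[>] 0) (𝓝 (s - c ^ 2)) := by
  have hae : ∀ᵐ x ∂(volume.restrict (Ioo (0 : ℝ) 1)), ‖h x‖ ≤ M := by
    filter_upwards [ae_restrict_mem measurableSet_Ioo] with x hx using hM x hx
  have hint : Integrable h (volume.restrict (Ioo (0 : ℝ) 1)) :=
    Integrable.of_bound hm.aestronglyMeasurable M hae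
  have hint2 : Integrable (fun x => (h x) ^ 2) (volume.restrict (Ioo (0 : ℝ) 1)) := by
    simp only [sq]
    exact hint.bdd_mul hm.aestronglyMeasurable hae
  have hintl : Integrable (fun x => h x * Real.log x) (volume.restrict (Ioo (0 : ℝ) 1)) :=
    Integrable.bdd_mul integrable_log' hm.aestronglyMeasurable hae
  have one_int : ∫ x in Ioo (0 : ℝ) 1, (1 : ℝ) = 1 := by simp
  have key : ∀ θ ∈ Ioo (0 : ℝ) (1 / (2 * M)),
      |2 * sInf ((fun l : ℝ =>
            ∫ x in Ioo (0 : ℝ) 1,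
              Real.log ((1 + θ * h x) / (l * x ^ (l - 1))) * (1 + θ * h x)) '' Ioi 0)
          / θ ^ 2 - (s - c ^ 2)| ≤ (8 * M ^ 3 + 4) * θ := by
    intro θ hθ
    obtain ⟨t0, t1⟩ := hθ
    have tM : θ * M < 1 / 2 := by
      rw [lt_div_iff₀ (by positivity)] at t1; linarith
    have thalf : θ ≤ 1 / 2 := by nlinarith
    have hu : ∀ x ∈ Ioo (0 : ℝ) 1, |θ * h x| ≤ θ * M := fun x hx => by
      rw [abs_mul, abs_of_pos t0]
      exact mul_le_mul_of_nonneg_left (hM x hx) t0.le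
    have hpos : ∀ x ∈ Ioo (0 : ℝ) 1, 0 < 1 + θ * h x := fun x hx => by
      have := (abs_le.1 (hu x hx)).1; linarith
    -- remainder
    have hRm : Measurable (fun x => (1 + θ * h x) * Real.log (1 + θ * h x) - θ * h x
        - (θ * h x) ^ 2 / 2) := by fun_prop
    have hRb : ∀ x ∈ Ioo (0 : ℝ) 1, ‖(1 + θ * h x) * Real.log (1 + θ * h x) - θ * h x
        - (θ * h x) ^ 2 / 2‖ ≤ 4 * (θ * M) ^ 3 := fun x hx => by
      have := hu x hx
      refine (mul_log_bound (by linarith)).trans ?_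
      gcongr
    have hRi : Integrable (fun x => (1 + θ * h x) * Real.log (1 + θ * h x) - θ * h x
        - (θ * h x) ^ 2 / 2) (volume.restrict (Ioo (0 : ℝ) 1)) :=
      Integrable.of_bound hRm.aestronglyMeasurable (4 * (θ * M) ^ 3)
        (by filter_upwards [ae_restrict_mem measurableSet_Ioo] with x hx using hRb x hx)
    obtain ⟨R, hR⟩ : ∃ R, R = ∫ x in Ioo (0 : ℝ) 1,
        ((1 + θ * h x) * Real.log (1 + θ * h x) - θ * h x - (θ * h x) ^ 2 / 2) := ⟨_, rfl⟩
    have hRabs : |R| ≤ 4 * (θ * M) ^ 3 := by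
      have := norm_setIntegral_le_of_norm_le_const (μ := volume) (s := Ioo (0 : ℝ) 1)
        (by simp) hRb
      rw [hR]
      simpa using this
    -- the integral as a function of l
    have hF : ∀ l ∈ Ioi (0 : ℝ), ∫ x in Ioo (0 : ℝ) 1,
        Real.log ((1 + θ * h x) / (l * x ^ (l - 1))) * (1 + θ * h x)
        = R + θ ^ 2 / 2 * s - Real.log l + (l - 1) * (1 - θ * c) := by
      intro l hl'
      have hl0 : 0 < l := hl'
      have e : ∫ x in Ioo (0 : ℝ) 1,
          Real.log ((1 + θ * h x) / (l * x ^ (l - 1))) * (1 + θ * h x)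
          = ∫ x in Ioo (0 : ℝ) 1,
            (((1 + θ * h x) * Real.log (1 + θ * h x) - θ * h x - (θ * h x) ^ 2 / 2)
            + (θ ^ 2 / 2 * (h x) ^ 2 + (θ * (1 - Real.log l) * h x
            + (-Real.log l * 1 + (-(l - 1) * Real.log x
              + -(l - 1) * θ * (h x * Real.log x)))))) := by
        refine setIntegral_congr_fun measurableSet_Ioo fun x hx => ?_
        have hx0 : 0 < x := hx.1
        have := Real.rpow_pos_of_pos hx0 (l - 1)
        rw [Real.log_div (hpos x hx).ne' (by positivity), Real.log_mul hl0.ne' this.ne',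
          Real.log_rpow hx0]
        ring
      have i1 := hint2.const_mul (θ ^ 2 / 2)
      have i2 := hint.const_mul (θ * (1 - Real.log l))
      have i3 : Integrable (fun _ : ℝ => -Real.log l * 1) (volume.restrict (Ioo (0 : ℝ) 1)) :=
        integrable_const _
      have i4 := Integrable.const_mul integrable_log' (-(l - 1))
      have i5 := hintl.const_mul (-(l - 1) * θ)
      have j4 := i4.fun_add i5
      have j3 := i3.fun_add j4
      have j2 := i2.fun_add j3
      have j1 := i1.fun_add j2
      rw [e, integral_add hRi j1, integral_add i1 j2, integral_add i2 j3, integral_add i3 j4,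
        integral_add i4 i5, integral_const_mul, integral_const_mul, integral_const_mul,
        integral_const_mul, integral_const_mul, h0, h2, hl, one_int, set_integral_log, ← hR]
      ring
    have tc : |θ * c| ≤ θ := by
      rw [abs_mul, abs_of_pos t0]; nlinarith
    have hb : 0 < 1 - θ * c := by
      have := (abs_le.1 tc).2; linarith
    have hmin : sInf ((fun l : ℝ =>
            ∫ x in Ioo (0 : ℝ) 1,
              Real.log ((1 + θ * h x) / (l * x ^ (l - 1))) * (1 + θ * h x)) '' Ioi 0)
        = R + θ ^ 2 / 2 * s + Real.log (1 - θ * c) + θ * c := by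
      refine IsLeast.csInf_eq ⟨⟨(1 - θ * c)⁻¹, inv_pos.2 hb, ?_⟩, ?_⟩
      · simp only
        rw [hF _ (inv_pos.2 hb), Real.log_inv]
        field_simp
        ring
      · rintro _ ⟨l, hl', rfl⟩
        simp only
        rw [hF l hl']
        have hl0 : 0 < l := hl'
        have := Real.log_le_sub_one_of_pos (mul_pos hl0 hb)
        rw [Real.log_mul hl0.ne' hb.ne'] at this
        linarith
    rw [hmin]
    have hlog := log_bound (u := -(θ * c)) (by rw [abs_neg]; linarith)
    rw [abs_neg] at hlog
    have hlog2 : 2 * |θ * c| ^ 3 ≤ 2 * θ ^ 3 := by gcongr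
    have e2 : 2 * (R + θ ^ 2 / 2 * s + Real.log (1 - θ * c) + θ * c) / θ ^ 2 - (s - c ^ 2)
        = 2 * (R + (Real.log (1 + -(θ * c)) - -(θ * c) + (-(θ * c)) ^ 2 / 2)) / θ ^ 2 := by
      rw [← sub_eq_add_neg 1 (θ * c)]
      field_simp
      ring
    rw [e2, abs_div, abs_mul, abs_two, abs_of_pos (by positivity : (0:ℝ) < θ ^ 2),
      div_le_iff₀ (by positivity)]
    have := abs_add_le R (Real.log (1 + -(θ * c)) - -(θ * c) + (-(θ * c)) ^ 2 / 2)
    calc _ ≤ 2 * (4 * (θ * M) ^ 3 + 2 * θ ^ 3) := by linarith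
      _ = _ := by ring
  rw [tendsto_iff_norm_sub_tendsto_zero]
  refine squeeze_zero' (Eventually.of_forall fun _ => norm_nonneg _) ?_
    (g := fun θ => (8 * M ^ 3 + 4) * θ) ?_
  · filter_upwards [Ioo_mem_nhdsGT (show (0 : ℝ) < 1 / (2 * M) by positivity)] with θ hθ
    exact key θ hθ
  · have : Tendsto (fun θ : ℝ => (8 * M ^ 3 + 4) * θ) (𝓝 0) (𝓝 ((8 * M ^ 3 + 4) * 0)) :=
      (continuous_const.mul continuous_id).tendsto 0
    rw [mul_zero] at this
    exact this.mono_left nhdsWithin_le_nhds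

/-- **Kullback–Leibler asymptotics for the contamination alternative.**
For `r > 1` and `h(x) = r x^{r−1} − 1`, one has
`∫₀¹ h² − (∫₀¹ h(x) ln x dx)² = (r−1)⁴/(r²(2r−1))`.  Consequently, for the
contamination alternative `G₁(x,θ) = (1−θ)x + θ x^r` with density
`g₁(x,θ) = 1 + θ h(x)`, the Kullback–Leibler distance
`K(θ) = inf_{λ>0} ∫₀¹ ln(g₁(x,θ)/(λ x^{λ−1})) g₁(x,θ) dx` to the power function
family satisfies `2K(θ) ~ ((r−1)⁴/(r²(2r−1))) θ²` as `θ → 0+`. -/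
theorem kullback_leibler_contamination (r : ℝ) (hr : 1 < r) :
    ((∫ x in Ioo (0 : ℝ) 1, (r * x ^ (r - 1) - 1) ^ 2)
        - (∫ x in Ioo (0 : ℝ) 1, (r * x ^ (r - 1) - 1) * Real.log x) ^ 2)
      = (r - 1) ^ 4 / (r ^ 2 * (2 * r - 1)) ∧
    Tendsto
      (fun θ : ℝ =>
        2 * sInf ((fun l : ℝ =>
            ∫ x in Ioo (0 : ℝ) 1,
              Real.log ((1 + θ * (r * x ^ (r - 1) - 1)) / (l * x ^ (l - 1)))
                * (1 + θ * (r * x ^ (r - 1) - 1))) '' Ioi 0)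
          / θ ^ 2)
      (𝓝[>] 0)
      (𝓝 ((r - 1) ^ 4 / (r ^ 2 * (2 * r - 1)))) := by
  have i1 := integrable_rpow' (p := r - 1) (by linarith)
  have i2 := integrable_rpow' (p := 2 * (r - 1)) (by linarith)
  have i3 := integrable_rpow_log hr
  have ic : ∀ a : ℝ, Integrable (fun _ : ℝ => a) (volume.restrict (Ioo (0 : ℝ) 1)) :=
    fun a => integrable_const _
  have one_int : ∫ x in Ioo (0 : ℝ) 1, (1 : ℝ) = 1 := by simp
  have hr0 : r ≠ 0 := by linarith
  have hr1 : 2 * r - 1 ≠ 0 := by linarith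
  have h0 : ∫ x in Ioo (0 : ℝ) 1, (r * x ^ (r - 1) - 1) = 0 := by
    rw [integral_sub (Integrable.const_mul i1 r) (ic 1), integral_const_mul,
      set_integral_rpow (by linarith), one_int, sub_add_cancel, mul_one_div_cancel hr0, sub_self]
  have h2 : ∫ x in Ioo (0 : ℝ) 1, (r * x ^ (r - 1) - 1) ^ 2 = (r - 1) ^ 2 / (2 * r - 1) := by
    have e : ∫ x in Ioo (0 : ℝ) 1, (r * x ^ (r - 1) - 1) ^ 2
        = ∫ x in Ioo (0 : ℝ) 1, (r ^ 2 * x ^ (2 * (r - 1)) - 2 * r * x ^ (r - 1) + 1) := by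
      refine setIntegral_congr_fun measurableSet_Ioo fun x hx => ?_
      rw [two_mul (r - 1), Real.rpow_add hx.1]
      ring
    have k1 := Integrable.const_mul i2 (r ^ 2)
    have k2 := Integrable.const_mul i1 (2 * r)
    have k3 : Integrable (fun x : ℝ => r ^ 2 * x ^ (2 * (r - 1)) - 2 * r * x ^ (r - 1))
        (volume.restrict (Ioo (0 : ℝ) 1)) := k1.sub k2
    rw [e, integral_add k3 (ic 1), integral_sub k1 k2, integral_const_mul,
      integral_const_mul, set_integral_rpow (by linarith), set_integral_rpow (by linarith),
      one_int, show 2 * (r - 1) + 1 = 2 * r - 1 by ring, sub_add_cancel]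
    obtain ⟨D, hD⟩ : ∃ D, D = 2 * r - 1 := ⟨_, rfl⟩
    rw [← hD] at hr1 ⊢
    field_simp
    rw [hD]
    ring
  have hl : ∫ x in Ioo (0 : ℝ) 1, (r * x ^ (r - 1) - 1) * Real.log x = (r - 1) / r := by
    have e : ∫ x in Ioo (0 : ℝ) 1, (r * x ^ (r - 1) - 1) * Real.log x
        = ∫ x in Ioo (0 : ℝ) 1, (r * (x ^ (r - 1) * Real.log x) - Real.log x) := by
      congr 1; ext x; ring
    rw [e, integral_sub (Integrable.const_mul i3 r) integrable_log', integral_const_mul,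
      set_integral_rpow_log hr, set_integral_log]
    field_simp
    ring
  have e : (r - 1) ^ 2 / (2 * r - 1) - ((r - 1) / r) ^ 2
      = (r - 1) ^ 4 / (r ^ 2 * (2 * r - 1)) := by
    obtain ⟨D, hD⟩ : ∃ D, D = 2 * r - 1 := ⟨_, rfl⟩
    rw [← hD] at hr1 ⊢
    field_simp
    rw [hD]
    ring
  refine ⟨by rw [h2, hl, e], ?_⟩
  rw [← e]
  refine generic_limit (fun x => r * x ^ (r - 1) - 1) r _ _ (by fun_prop) hr.le ?_ h0 h2 hl ?_
  · intro x hx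
    have a1 := Real.rpow_nonneg hx.1.le (r - 1)
    have a2 := Real.rpow_le_one hx.1.le hx.2.le (by linarith : 0 ≤ r - 1)
    rw [abs_le]
    constructor <;> nlinarith
  · rw [abs_of_nonneg (div_nonneg (by linarith) (by linarith)), div_le_one (by linarith)]
    linarith
end

section
/- Let X and Y be i.i.d. uniform random variables on (0,1), and for t ∈ (0,1) define the kernel Ξ_PR(X,Y;t) = 1{min(X/Y, Y/X) < t} − (1/2)·1{X < t} − (1/2)·1{Y < t}. Then for every s, t ∈ (0,1), E[ Ξ_PR(X,Y;t) | X = s ] = 1{s < t}·(1/2 − s/t) + s·t − t/2. -/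
open MeasureTheory Set

/-- **Projection of the Kolmogorov-type kernel family.**  For `X, Y` i.i.d. uniform on
`(0,1)` and `t ∈ (0,1)`, the kernel
`Ξ_PR(X,Y;t) = 1{min(X/Y, Y/X) < t} − (1/2)1{X < t} − (1/2)1{Y < t}`
has conditional expectation given `X = s` (i.e. the integral over the uniform
variable `Y` at `X = s`) equal to `1{s < t}(1/2 − s/t) + s·t − t/2`,
for every `s, t ∈ (0,1)`. -/
theorem projection_XiPR (s t : ℝ) (hs : s ∈ Ioo (0 : ℝ) 1) (ht : t ∈ Ioo (0 : ℝ) 1) :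
    (∫ y in Ioo (0 : ℝ) 1,
        ((if min (s / y) (y / s) < t then (1 : ℝ) else 0)
          - (1 / 2) * (if s < t then (1 : ℝ) else 0)
          - (1 / 2) * (if y < t then (1 : ℝ) else 0)))
      = (if s < t then (1 : ℝ) else 0) * (1 / 2 - s / t) + s * t - t / 2 := by
  obtain ⟨hs0, hs1⟩ := hs
  obtain ⟨ht0, ht1⟩ := ht
  have hlt : s * t < s / t := by
    rw [lt_div_iff₀ ht0]
    have h : t * t < 1 := by nlinarith
    nlinarith
  have hst : s * t < 1 := by nlinarith
  have key : ∀ y ∈ Ioo (0 : ℝ) 1,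
      ((if min (s / y) (y / s) < t then (1 : ℝ) else 0)
          - (1 / 2) * (if s < t then (1 : ℝ) else 0)
          - (1 / 2) * (if y < t then (1 : ℝ) else 0))
      = ((Iio (s * t)).indicator (fun _ => (1 : ℝ)) y
          + (Ioi (s / t)).indicator (fun _ => (1 : ℝ)) y
          - (1 / 2) * (if s < t then (1 : ℝ) else 0))
          - (Iio t).indicator (fun _ => (1 / 2 : ℝ)) y := by
    rintro y ⟨hy0, hy1⟩
    have h1 : min (s / y) (y / s) < t ↔ (y < s * t ∨ s / t < y) := by
      rw [min_lt_iff, div_lt_iff₀ hy0, div_lt_iff₀ hs0, div_lt_iff₀ ht0, mul_comm t y,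
        mul_comm t s, or_comm]
    simp only [h1, indicator, mem_Iio, mem_Ioi]
    by_cases ha : y < s * t
    · have hb : ¬ s / t < y := by linarith
      simp only [ha, hb]; split_ifs <;> simp_all
    · simp only [ha]; split_ifs <;> simp_all
  rw [setIntegral_congr_fun measurableSet_Ioo key]
  have hi : ∀ (A : Set ℝ) (c : ℝ), MeasurableSet A →
      IntegrableOn (A.indicator (fun _ => c)) (Ioo (0 : ℝ) 1) := by
    intro A c hA
    exact (integrable_const c).indicator hA
  have hc : ∀ c : ℝ, IntegrableOn (fun _ => c) (Ioo (0 : ℝ) 1) := fun c => integrable_const c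
  have i1 := hi _ 1 (measurableSet_Iio (a := s * t))
  have i2 := hi _ 1 (measurableSet_Ioi (a := s / t))
  have i3 := hi _ (1 / 2) (measurableSet_Iio (a := t))
  have i4 := hc ((1 / 2) * (if s < t then (1 : ℝ) else 0))
  rw [integral_sub (by exact (i1.add i2).sub i4) i3, integral_sub (by exact i1.add i2) i4,
    integral_add i1 i2,
    setIntegral_indicator measurableSet_Iio, setIntegral_indicator measurableSet_Ioi,
    setIntegral_indicator measurableSet_Iio]
  have e1 : Ioo (0 : ℝ) 1 ∩ Iio (s * t) = Ioo 0 (s * t) := by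
    rw [Ioo_inter_Iio, min_eq_right hst.le]
  have e2 : Ioo (0 : ℝ) 1 ∩ Iio t = Ioo 0 t := by
    rw [Ioo_inter_Iio, min_eq_right ht1.le]
  have e3 : Ioo (0 : ℝ) 1 ∩ Ioi (s / t) = Ioo (s / t) 1 := by
    rw [Ioo_inter_Ioi, max_eq_right (by positivity)]
  have hp : 0 ≤ s * t := by positivity
  rw [e1, e2, e3]
  simp only [setIntegral_const, Measure.real, Real.volume_Ioo, smul_eq_mul, sub_zero,
    ENNReal.toReal_ofReal hp, ENNReal.toReal_ofReal ht0.le, ENNReal.toReal_ofReal zero_le_one]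
  by_cases h : s < t
  · have h2 : s / t < 1 := (div_lt_one ht0).2 h
    rw [ENNReal.toReal_ofReal (by linarith)]
    simp only [h, if_true]; ring
  · have h2 : 1 ≤ s / t := (one_le_div ht0).2 (not_lt.1 h)
    rw [ENNReal.ofReal_of_nonpos (by linarith)]
    simp only [h, if_false, ENNReal.toReal_zero]; ring
end

section
/- Let r > 1, h(x) = r x^{r−1} − 1, and ξ_PR(s;t) = 1{s < t}·(1/2 − s/t) + s·t − t/2. Then sup_{t∈(0,1)} | 2 ∫_0^1 ξ_PR(s;t) h(s) ds | = ( (r−1)² / (r+1) ) · r^{−r/(r−1)}. -/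
open MeasureTheory Set


lemma aux_cont (r c d : ℝ) (hr : 1 < r) :
    Continuous (fun s : ℝ => (c + d * s) * (r * s ^ (r - 1) - 1)) := by
  have h : Continuous (fun s : ℝ => s ^ (r - 1)) :=
    Real.continuous_rpow_const (by linarith)
  fun_prop

lemma aux_int (r c d a : ℝ) (hr : 1 < r) (ha : 0 < a) :
    ∫ s in Ioo (0 : ℝ) a, (c + d * s) * (r * s ^ (r - 1) - 1)
      = c * (a ^ r - a) + d * (r / (r + 1) * a ^ (r + 1) - a ^ 2 / 2) := by
  rw [← integral_Ioc_eq_integral_Ioo, ← intervalIntegral.integral_of_le ha.le]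
  have hd : ∀ s ∈ uIcc (0 : ℝ) a, HasDerivAt
      (fun s : ℝ => c * (s ^ r - s) + d * (r / (r + 1) * s ^ (r + 1) - s ^ 2 / 2))
      ((c + d * s) * (r * s ^ (r - 1) - 1)) s := by
    intro s hs
    rw [uIcc_of_le ha.le] at hs
    have h1 : HasDerivAt (fun s : ℝ => s ^ r) (r * s ^ (r - 1)) s :=
      Real.hasDerivAt_rpow_const (Or.inr hr.le)
    have h2 : HasDerivAt (fun s : ℝ => s ^ (r + 1)) ((r + 1) * s ^ (r + 1 - 1)) s :=
      Real.hasDerivAt_rpow_const (Or.inr (by linarith))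
    have h3 : HasDerivAt (fun s : ℝ => s ^ 2) (2 * s) s := by
      simpa using hasDerivAt_pow 2 s
    have h4 := ((h1.sub (hasDerivAt_id s)).const_mul c).add
      (((h2.const_mul (r / (r + 1))).sub (h3.div_const 2)).const_mul d)
    refine h4.congr_deriv ?_
    have e : s ^ (r + 1 - 1) = s * s ^ (r - 1) := by
      have := Real.rpow_add_of_nonneg hs.1 (zero_le_one) (by linarith : 0 ≤ r - 1)
      rw [Real.rpow_one] at this
      rw [← this]; congr 1; ring
    rw [e]
    have : r + 1 ≠ 0 := by linarith
    field_simp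
  rw [intervalIntegral.integral_eq_sub_of_hasDerivAt hd
    ((aux_cont r c d hr).intervalIntegrable _ _)]
  rw [Real.zero_rpow (by linarith), Real.zero_rpow (by linarith)]
  ring

lemma aux_total (r t : ℝ) (hr : 1 < r) (ht : t ∈ Ioo (0 : ℝ) 1) :
    2 * ∫ s in Ioo (0 : ℝ) 1,
            ((if s < t then (1 : ℝ) else 0) * (1 / 2 - s / t) + s * t - t / 2)
              * (r * s ^ (r - 1) - 1) = (r - 1) / (r + 1) * (t - t ^ r) := by
  obtain ⟨h0, h1⟩ := ht
  have hi : ∀ c d : ℝ, IntegrableOn (fun s : ℝ => (c + d * s) * (r * s ^ (r - 1) - 1))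
      (Ioo (0 : ℝ) 1) := fun c d =>
    ((aux_cont r c d hr).continuousOn.integrableOn_Icc).mono_set Ioo_subset_Icc_self
  have e : ∀ s : ℝ, ((if s < t then (1 : ℝ) else 0) * (1 / 2 - s / t) + s * t - t / 2)
              * (r * s ^ (r - 1) - 1) =
      (Iio t).indicator (fun s : ℝ => (1 / 2 + (-1 / t) * s) * (r * s ^ (r - 1) - 1)) s
      + (-t / 2 + t * s) * (r * s ^ (r - 1) - 1) := by
    intro s
    by_cases hs : s < t
    · rw [indicator_of_mem (by exact hs), if_pos hs]; ring
    · rw [indicator_of_notMem (by exact hs), if_neg hs]; ring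
  simp_rw [e]
  rw [integral_add ((hi _ _).indicator measurableSet_Iio) (hi _ _),
    setIntegral_indicator measurableSet_Iio]
  have : Ioo (0 : ℝ) 1 ∩ Iio t = Ioo 0 t := by
    rw [Ioo_inter_Iio, min_eq_right h1.le]
  rw [this, aux_int r _ _ t hr h0, aux_int r _ _ 1 hr one_pos, Real.rpow_add h0]
  simp only [Real.one_rpow, Real.rpow_one]
  have : r + 1 ≠ 0 := by linarith
  field_simp
  ring

/-- For `r > 1`, with `h(x) = r x^{r−1} − 1` and
`ξ_PR(s;t) = 1{s < t}(1/2 − s/t) + s·t − t/2`,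
`sup_{t∈(0,1)} |2 ∫₀¹ ξ_PR(s;t) h(s) ds| = ((r−1)²/(r+1)) · r^{−r/(r−1)}`. -/
theorem sup_projection_contamination (r : ℝ) (hr : 1 < r) :
    sSup ((fun t : ℝ =>
        |2 * ∫ s in Ioo (0 : ℝ) 1,
            ((if s < t then (1 : ℝ) else 0) * (1 / 2 - s / t) + s * t - t / 2)
              * (r * s ^ (r - 1) - 1)|) '' Ioo 0 1)
      = ((r - 1) ^ 2 / (r + 1)) * r ^ (-(r / (r - 1))) := by
  have hr0 : 0 < r := by linarith
  have hr1 : r - 1 ≠ 0 := by linarith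
  set t₀ : ℝ := r ^ (-(1 / (r - 1))) with ht₀
  have hp : 0 < t₀ := Real.rpow_pos_of_pos hr0 _
  have hl : t₀ < 1 := Real.rpow_lt_one_of_one_lt_of_neg hr
    (by have : 0 < 1 / (r - 1) := by apply one_div_pos.mpr; linarith
        linarith)
  have hq : t₀ ^ r = t₀ / r := by
    rw [ht₀, ← Real.rpow_mul hr0.le]
    rw [← Real.rpow_sub_one hr0.ne']
    congr 1
    field_simp
    ring
  have hw : r ^ (-(r / (r - 1))) = t₀ / r := by
    rw [← hq, ht₀, ← Real.rpow_mul hr0.le]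
    congr 1
    field_simp
  have hk : 0 ≤ (r - 1) / (r + 1) := div_nonneg (by linarith) (by linarith)
  have hv : (r - 1) ^ 2 / (r + 1) * (t₀ / r) = (r - 1) / (r + 1) * (t₀ - t₀ / r) := by
    have : r + 1 ≠ 0 := by linarith
    field_simp
  rw [hw, hv]
  apply IsGreatest.csSup_eq
  constructor
  · refine ⟨t₀, ⟨hp, hl⟩, ?_⟩
    simp only
    rw [aux_total r t₀ hr ⟨hp, hl⟩, hq, abs_of_nonneg]
    apply mul_nonneg hk
    have := div_le_self hp.le hr.le
    linarith
  · rintro _ ⟨t, ht, rfl⟩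
    simp only
    rw [aux_total r t hr ht, abs_of_nonneg]
    · apply mul_le_mul_of_nonneg_left _ hk
      have hu : 0 ≤ t / t₀ := div_nonneg ht.1.le hp.le
      have hb := one_add_mul_self_le_rpow_one_add (s := t / t₀ - 1) (by linarith) hr.le
      rw [add_sub_cancel, Real.div_rpow ht.1.le hp.le, hq] at hb
      have hm := mul_le_mul_of_nonneg_left hb (div_pos hp hr0).le
      have e1 : t₀ / r * (t ^ r / (t₀ / r)) = t ^ r := by field_simp
      have e2 : t₀ / r * (1 + r * (t / t₀ - 1)) = t₀ / r + t - t₀ := by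
        field_simp
        ring
      rw [e1, e2] at hm
      linarith
    · apply mul_nonneg hk
      have := Real.rpow_le_rpow_of_exponent_ge ht.1 ht.2.le hr.le
      rw [Real.rpow_one] at this
      linarith
end

section
/- The function f(r) = 27·(2r−1)·r² / ( 5·(r+1)⁴ ) on the interval (1, ∞) attains its maximum at the unique point r* = 2 + √3, i.e. f(r) ≤ f(2+√3) for all r > 1; moreover f(2+√3) < 1. -/
/-- The local Bahadur efficiency `f(r) = 27(2r−1)r²/(5(r+1)⁴)` of the integral-type
test against the contamination alternative attains its maximum on `(1, ∞)` at the
unique point `r* = 2 + √3`, and `f(2 + √3) < 1`. -/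
theorem efficiency_contamination_max :
    let f : ℝ → ℝ := fun r => 27 * (2 * r - 1) * r ^ 2 / (5 * (r + 1) ^ 4)
    (∀ r > (1 : ℝ), f r ≤ f (2 + Real.sqrt 3)) ∧
    (∀ r > (1 : ℝ), r ≠ 2 + Real.sqrt 3 → f r < f (2 + Real.sqrt 3)) ∧
    f (2 + Real.sqrt 3) < 1 := by
  intro f
  have ht : Real.sqrt 3 ^ 2 = 3 := Real.sq_sqrt (by norm_num)
  have h1 : (1.7 : ℝ) < Real.sqrt 3 := Real.lt_sqrt_of_sq_lt (by norm_num)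
  have h2 : Real.sqrt 3 < 1.8 := (Real.sqrt_lt' (by norm_num)).2 (by norm_num)
  generalize Real.sqrt 3 = t at ht h1 h2 ⊢
  have hv : f (2 + t) = 3 * (3 + 2 * t) / 20 := by
    have h0 : (0 : ℝ) < 2 + t + 1 := by linarith
    have e1 : (2 + t + 1) ^ 4 = 36 * (2 + t) ^ 2 := by
      linear_combination (t ^ 2 + 12 * t + 21) * ht
    have e2 : (2 + t) ≠ 0 := by linarith
    show 27 * (2 * (2 + t) - 1) * (2 + t) ^ 2 / (5 * (2 + t + 1) ^ 4) = _
    rw [e1]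
    field_simp
    ring
  have key : ∀ r > (1 : ℝ), r ≠ 2 + t → f r < f (2 + t) := by
    intro r hr hne
    rw [hv]
    show 27 * (2 * r - 1) * r ^ 2 / (5 * (r + 1) ^ 4) < _
    have h0 : (0 : ℝ) < r + 1 := by linarith
    rw [div_lt_iff₀ (by positivity)]
    have hp : 0 < (r - (2 + t)) ^ 2 := by
      have := sub_ne_zero.2 hne
      positivity
    have hq : 0 < (3 + 2 * t) * r ^ 2 + (22 * t - 36) * r + (2 * t - 3) := by
      have a : 0 < (3 + 2 * t) * r ^ 2 := by
        have : 0 < 3 + 2 * t := by linarith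
        positivity
      have b : 0 < (22 * t - 36) * r := mul_pos (by linarith) (by linarith)
      linarith
    have hm := mul_pos hp hq
    have e : (r - (2 + t)) ^ 2 * ((3 + 2 * t) * r ^ 2 + (22 * t - 36) * r + (2 * t - 3))
        = (3 + 2 * t) * (r + 1) ^ 4 - 36 * (2 * r - 1) * r ^ 2 := by
      obtain ⟨c, hc⟩ : ∃ c, c = t ^ 2 - 3 := ⟨_, rfl⟩
      grind
    rw [e] at hm
    linarith
  refine ⟨fun r hr => ?_, key, ?_⟩
  · by_cases h : r = 2 + t
    · rw [h]
    · exact (key r hr h).le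
  · rw [hv]; linarith
end

section
/- Let ψ_PR(x) = 1/6 + (2/3)·x·ln(x) on (0,1). Then ∫_0^1 ψ_PR(x) dx = 0, ∫_0^1 ψ_PR(x) ln(x) dx = 0, and consequently ∫_0^1 ψ_PR(x)² dx − ( ∫_0^1 ψ_PR(x) ln(x) dx )² = 5/972. Hence for the alternative density g_3(x,θ) = 1 + θ·ψ_PR(x) (the third alternative) the Kullback–Leibler distance to the power function family satisfies 2K(θ) ~ (5/972)·θ² as θ → 0+. -/
open MeasureTheory Set Filter Topology

lemma aux_ftc (F f : ℝ → ℝ) (hF : Continuous F)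
    (hd : ∀ x ∈ Ioo (0:ℝ) 1, HasDerivAt F (f x) x)
    (hi : IntegrableOn f (Ioo (0:ℝ) 1)) : ∫ x in Ioo (0:ℝ) 1, f x = F 1 - F 0 := by
  rw [← integral_Ioc_eq_integral_Ioo, ← intervalIntegral.integral_of_le zero_le_one]
  refine intervalIntegral.integral_eq_sub_of_hasDerivAt_of_le zero_le_one hF.continuousOn hd ?_
  rw [intervalIntegrable_iff_integrableOn_Ioo_of_le zero_le_one]
  exact hi

lemma aux_int_cont (f : ℝ → ℝ) (hf : Continuous f) : IntegrableOn f (Ioo (0:ℝ) 1) :=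
  (hf.integrableOn_Icc (a := 0) (b := 1)).mono_set Ioo_subset_Icc_self

lemma aux_int_log (f : ℝ → ℝ) (hf : Continuous f) :
    IntegrableOn (fun x => f x * Real.log x) (Ioo (0:ℝ) 1) := by
  rw [← intervalIntegrable_iff_integrableOn_Ioo_of_le zero_le_one]
  exact intervalIntegral.intervalIntegrable_log'.continuousOn_mul hf.continuousOn

noncomputable def auxPsi (x : ℝ) : ℝ := 1 / 6 + (2 / 3) * x * Real.log x

lemma auxPsi_cont : Continuous auxPsi := by
  have h : auxPsi = fun x => 1 / 6 + (2 / 3) * (x * Real.log x) := by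
    funext x; simp only [auxPsi]; ring
  rw [h]
  exact continuous_const.add (continuous_const.mul Real.continuous_mul_log)

lemma auxPsi_abs (x : ℝ) (hx : x ∈ Ioo (0:ℝ) 1) : |auxPsi x| ≤ 1 / 2 := by
  have h1 : Real.log x ≤ 0 := Real.log_nonpos hx.1.le hx.2.le
  have h2 := Real.one_sub_inv_le_log_of_pos hx.1
  have h3 : x * (1 - x⁻¹) ≤ x * Real.log x := mul_le_mul_of_nonneg_left h2 hx.1.le
  have h4 : x * (1 - x⁻¹) = x - 1 := by field_simp [hx.1.ne']
  have h5 : x * Real.log x ≤ 0 := mul_nonpos_of_nonneg_of_nonpos hx.1.le h1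
  have := hx.1
  rw [abs_le]; unfold auxPsi
  constructor <;> nlinarith

lemma auxPsi_int : ∫ x in Ioo (0:ℝ) 1, auxPsi x = 0 := by
  have hc := Real.continuous_mul_log
  rw [aux_ftc (fun x => x / 6 + 2 / 3 * (x * (x * Real.log x) / 2 - x ^ 2 / 4)) auxPsi
    (by fun_prop) ?_ (aux_int_cont _ auxPsi_cont)]
  · norm_num
  · intro x hx
    have hl := Real.hasDerivAt_log hx.1.ne'
    have hid := hasDerivAt_id' x
    have := (hid.div_const 6).add ((((hid.mul (hid.mul hl)).div_const 2).sub
      ((hid.pow 2).div_const 4)).const_mul (2/3))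
    refine this.congr_deriv ?_
    have := hx.1.ne'
    simp [auxPsi]; field_simp; ring

lemma auxPsi_log : ∫ x in Ioo (0:ℝ) 1, auxPsi x * Real.log x = 0 := by
  have hc := Real.continuous_mul_log
  rw [aux_ftc (fun x => (x * Real.log x - x) / 6 + 2 / 3 * ((x * Real.log x) ^ 2 / 2
    - x * (x * Real.log x) / 2 + x ^ 2 / 4)) _
    (by fun_prop) ?_ (aux_int_log _ auxPsi_cont)]
  · norm_num
  · intro x hx
    have hl := Real.hasDerivAt_log hx.1.ne'
    have hid := hasDerivAt_id' x
    have := (((hid.mul hl).sub hid).div_const 6).add ((((((hid.mul hl).pow 2).div_const 2).sub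
      ((hid.mul (hid.mul hl)).div_const 2)).add
      ((hid.pow 2).div_const 4)).const_mul (2/3))
    refine this.congr_deriv ?_
    have := hx.1.ne'
    simp [auxPsi]; field_simp; ring

lemma auxPsi_sq : ∫ x in Ioo (0:ℝ) 1, auxPsi x ^ 2 = 5 / 972 := by
  have hc := Real.continuous_mul_log
  rw [aux_ftc (fun x => x / 36 + 2 / 9 * (x * (x * Real.log x) / 2 - x ^ 2 / 4)
      + 4 / 9 * (x * (x * Real.log x) ^ 2 / 3
    - 2 / 9 * (x ^ 2 * (x * Real.log x)) + 2 / 27 * x ^ 3)) (fun x => auxPsi x ^ 2)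
    (by fun_prop) ?_ (aux_int_cont _ (auxPsi_cont.pow 2))]
  · norm_num
  · intro x hx
    have hl := Real.hasDerivAt_log hx.1.ne'
    have hid := hasDerivAt_id' x
    have := ((hid.div_const 36).add ((((hid.mul (hid.mul hl)).div_const 2).sub
      ((hid.pow 2).div_const 4)).const_mul (2/9))).add
      (((((hid.mul ((hid.mul hl).pow 2)).div_const 3).sub
      (((hid.pow 2).mul (hid.mul hl)).const_mul (2/9))).add
      ((hid.pow 3).const_mul (2/27))).const_mul (4/9))
    refine this.congr_deriv ?_
    have := hx.1.ne'
    simp [auxPsi]; field_simp; ring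

lemma aux_entropy (u : ℝ) (hu : |u| ≤ 1 / 2) :
    |(1 + u) * Real.log (1 + u) - u - u ^ 2 / 2| ≤ 4 * |u| ^ 3 := by
  have h := Real.abs_log_sub_add_sum_range_le (x := -u) (by rw [abs_neg]; linarith) 2
  simp only [Finset.sum_range_succ, Finset.sum_range_zero, abs_neg, sub_neg_eq_add] at h
  norm_num at h
  set r := -u + u ^ 2 / 2 + Real.log (1 + u) with hr
  have h2 : |u| ^ 3 / (1 - |u|) ≤ 2 * |u| ^ 3 := by
    rw [div_le_iff₀ (by linarith)]
    nlinarith [pow_nonneg (abs_nonneg u) 3]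
  have h3 : (1 + u) * Real.log (1 + u) - u - u ^ 2 / 2 = (1 + u) * r + -(u ^ 3 / 2) := by
    rw [hr]; ring
  rw [h3]
  have h4 : |1 + u| ≤ 3 / 2 := by
    rw [abs_le] at hu ⊢; constructor <;> linarith [hu.1, hu.2]
  have h5 : |(1 + u) * r| ≤ 3 / 2 * (2 * |u| ^ 3) := by
    rw [abs_mul]; exact mul_le_mul h4 (h.trans h2) (abs_nonneg _) (by norm_num)
  have h6 : |-(u ^ 3 / 2)| = |u| ^ 3 / 2 := by
    rw [abs_neg, abs_div, abs_pow]; norm_num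
  have := abs_add_le ((1 + u) * r) (-(u ^ 3 / 2))
  have := pow_nonneg (abs_nonneg u) 3
  linarith

lemma aux_g_cont (θ : ℝ) : Continuous (fun x => 1 + θ * auxPsi x) :=
  continuous_const.add (continuous_const.mul auxPsi_cont)

lemma aux_glog_cont (θ : ℝ) :
    Continuous (fun x => (1 + θ * auxPsi x) * Real.log (1 + θ * auxPsi x)) :=
  Real.continuous_mul_log.comp (aux_g_cont θ)

lemma aux_abs_theta (θ : ℝ) (h0 : 0 < θ) (h1 : θ < 1) (x : ℝ) (hx : x ∈ Ioo (0:ℝ) 1) :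
    |θ * auxPsi x| ≤ θ * (1 / 2) := by
  rw [abs_mul, abs_of_pos h0]
  exact mul_le_mul_of_nonneg_left (auxPsi_abs x hx) h0.le

lemma aux_g_int (θ : ℝ) : ∫ x in Ioo (0:ℝ) 1, (1 + θ * auxPsi x) = 1 := by
  rw [integral_add (aux_int_cont _ continuous_const)
    ((aux_int_cont _ auxPsi_cont).const_mul θ), integral_const_mul, auxPsi_int]
  simp

lemma aux_g_log (θ : ℝ) : ∫ x in Ioo (0:ℝ) 1, (1 + θ * auxPsi x) * Real.log x = -1 := by
  have e : ∀ x, (1 + θ * auxPsi x) * Real.log x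
      = 1 * Real.log x + θ * (auxPsi x * Real.log x) := fun x => by ring
  simp_rw [e]
  rw [integral_add (aux_int_log _ continuous_const)
    ((aux_int_log _ auxPsi_cont).const_mul θ), integral_const_mul θ, auxPsi_log]
  simp only [one_mul]
  rw [← integral_Ioc_eq_integral_Ioo, ← intervalIntegral.integral_of_le zero_le_one, integral_log]
  simp

lemma aux_kl (θ : ℝ) (h0 : 0 < θ) (h1 : θ < 1) (l : ℝ) (hl : 0 < l) :
    ∫ x in Ioo (0:ℝ) 1,
      Real.log ((1 + θ * auxPsi x) / (l * x ^ (l - 1))) * (1 + θ * auxPsi x)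
    = (∫ x in Ioo (0:ℝ) 1, (1 + θ * auxPsi x) * Real.log (1 + θ * auxPsi x))
      + (l - 1 - Real.log l) := by
  have e : ∀ x ∈ Ioo (0:ℝ) 1,
      Real.log ((1 + θ * auxPsi x) / (l * x ^ (l - 1))) * (1 + θ * auxPsi x)
      = (1 + θ * auxPsi x) * Real.log (1 + θ * auxPsi x)
        - (Real.log l * (1 + θ * auxPsi x)
          + (l - 1) * ((1 + θ * auxPsi x) * Real.log x)) := by
    intro x hx
    have hb := aux_abs_theta θ h0 h1 x hx
    have hg : 1 + θ * auxPsi x ≠ 0 := by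
      have := (abs_le.1 hb).1
      intro h; linarith
    have hp := Real.rpow_pos_of_pos hx.1 (l - 1)
    rw [Real.log_div hg (mul_pos hl hp).ne', Real.log_mul hl.ne' hp.ne', Real.log_rpow hx.1]
    ring
  rw [setIntegral_congr_fun measurableSet_Ioo e]
  have i1 := (aux_int_cont _ (aux_g_cont θ)).const_mul (Real.log l)
  have i2 := (aux_int_log _ (aux_g_cont θ)).const_mul (l - 1)
  have h := integral_sub (aux_int_cont _ (aux_glog_cont θ)) (i1.add i2)
  simp only [Pi.add_apply] at h
  rw [h, integral_add i1 i2,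
    integral_const_mul, integral_const_mul, aux_g_int, aux_g_log]
  ring

lemma aux_inf_s19 (θ : ℝ) (h0 : 0 < θ) (h1 : θ < 1) :
    sInf ((fun l : ℝ => ∫ x in Ioo (0:ℝ) 1,
      Real.log ((1 + θ * auxPsi x) / (l * x ^ (l - 1))) * (1 + θ * auxPsi x)) '' Ioi 0)
    = ∫ x in Ioo (0:ℝ) 1, (1 + θ * auxPsi x) * Real.log (1 + θ * auxPsi x) := by
  apply IsLeast.csInf_eq
  constructor
  · refine ⟨1, one_pos (α := ℝ), ?_⟩
    have := aux_kl θ h0 h1 1 one_pos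
    simp only [Real.log_one, sub_self, add_zero] at this ⊢
    exact this
  · rintro _ ⟨l, hl, rfl⟩
    have := aux_kl θ h0 h1 l hl
    have h2 := Real.log_le_sub_one_of_pos (show 0 < l from hl)
    simp only [this]
    linarith

lemma aux_bound (θ : ℝ) (h0 : 0 < θ) (h1 : θ < 1) :
    |2 * (∫ x in Ioo (0:ℝ) 1, (1 + θ * auxPsi x) * Real.log (1 + θ * auxPsi x)) / θ ^ 2
      - 5 / 972| ≤ θ := by
  set E := ∫ x in Ioo (0:ℝ) 1, (1 + θ * auxPsi x) * Real.log (1 + θ * auxPsi x) with hE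
  have i0 := aux_int_cont _ (aux_glog_cont θ)
  have i1 := (aux_int_cont _ auxPsi_cont).const_mul θ
  have i2 := (aux_int_cont (fun x => auxPsi x ^ 2) (auxPsi_cont.pow 2)).const_mul (θ ^ 2 / 2)
  have e : ∫ x in Ioo (0:ℝ) 1, ((1 + θ * auxPsi x) * Real.log (1 + θ * auxPsi x)
      - (θ * auxPsi x + θ ^ 2 / 2 * auxPsi x ^ 2)) = E - θ ^ 2 / 2 * (5 / 972) := by
    have h := integral_sub i0 (i1.add i2)
    simp only [Pi.add_apply] at h
    rw [h, integral_add i1 i2, integral_const_mul, integral_const_mul, auxPsi_int, auxPsi_sq]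
    ring
  have b := norm_setIntegral_le_of_norm_le_const (μ := volume) (s := Ioo (0:ℝ) 1)
    (C := θ ^ 3 / 2)
    (f := fun x => (1 + θ * auxPsi x) * Real.log (1 + θ * auxPsi x)
      - (θ * auxPsi x + θ ^ 2 / 2 * auxPsi x ^ 2)) (by simp) (by
      intro x hx
      have hb := aux_abs_theta θ h0 h1 x hx
      have h := aux_entropy (θ * auxPsi x) (by linarith)
      have hp : |θ * auxPsi x| ^ 3 ≤ (θ * (1 / 2)) ^ 3 := pow_le_pow_left₀ (abs_nonneg _) hb 3
      rw [Real.norm_eq_abs]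
      have e2 : (1 + θ * auxPsi x) * Real.log (1 + θ * auxPsi x)
          - (θ * auxPsi x + θ ^ 2 / 2 * auxPsi x ^ 2)
          = (1 + θ * auxPsi x) * Real.log (1 + θ * auxPsi x) - θ * auxPsi x
            - (θ * auxPsi x) ^ 2 / 2 := by ring
      rw [e2]
      nlinarith)
  rw [e] at b
  simp at b
  have hk : 2 * E / θ ^ 2 - 5 / 972 = (E - θ ^ 2 / 2 * (5 / 972)) * (2 / θ ^ 2) := by
    field_simp
  rw [hk, abs_mul, abs_of_pos (show 0 < 2 / θ ^ 2 by positivity)]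
  calc _ ≤ θ ^ 3 / 2 * (2 / θ ^ 2) := mul_le_mul_of_nonneg_right b (by positivity)
    _ = θ := by field_simp

/-- With `ψ_PR(x) = 1/6 + (2/3)·x·ln x` on `(0,1)`:
`∫₀¹ ψ_PR = 0`, `∫₀¹ ψ_PR(x) ln x dx = 0`, and consequently
`∫₀¹ ψ_PR² − (∫₀¹ ψ_PR(x) ln x dx)² = 5/972`.  Hence for the third alternative
`g₃(x,θ) = 1 + θ·ψ_PR(x)`, the Kullback–Leibler distance
`K(θ) = inf_{λ>0} ∫₀¹ ln(g₃(x,θ)/(λ x^{λ−1})) g₃(x,θ) dx` to the power function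
family satisfies `2K(θ) ~ (5/972)·θ²` as `θ → 0+`. -/
theorem third_alternative_kullback_leibler :
    let ψ : ℝ → ℝ := fun x => 1 / 6 + (2 / 3) * x * Real.log x
    (∫ x in Ioo (0 : ℝ) 1, ψ x = 0) ∧
    (∫ x in Ioo (0 : ℝ) 1, ψ x * Real.log x = 0) ∧
    ((∫ x in Ioo (0 : ℝ) 1, ψ x ^ 2)
        - (∫ x in Ioo (0 : ℝ) 1, ψ x * Real.log x) ^ 2 = 5 / 972) ∧
    Tendsto
      (fun θ : ℝ =>
        2 * sInf ((fun l : ℝ =>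
            ∫ x in Ioo (0 : ℝ) 1,
              Real.log ((1 + θ * ψ x) / (l * x ^ (l - 1))) * (1 + θ * ψ x)) '' Ioi 0)
          / θ ^ 2)
      (𝓝[>] 0) (𝓝 (5 / 972)) := by
  intro ψ
  have hψ : ψ = auxPsi := rfl
  rw [hψ]
  refine ⟨auxPsi_int, auxPsi_log, ?_, ?_⟩
  · rw [auxPsi_sq, auxPsi_log]; norm_num
  · rw [tendsto_iff_norm_sub_tendsto_zero]
    have hid : Tendsto (fun θ : ℝ => θ) (𝓝[>] 0) (𝓝 0) := tendsto_id.mono_left nhdsWithin_le_nhds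
    refine squeeze_zero' (Eventually.of_forall fun _ => norm_nonneg _) ?_ hid
    filter_upwards [Ioo_mem_nhdsGT (zero_lt_one' ℝ)] with θ hθ
    rw [aux_inf_s19 θ hθ.1 hθ.2, Real.norm_eq_abs]
    exact aux_bound θ hθ.1 hθ.2
end
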